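/- arXiv:2303.14600 — 2 statements merged into one kernel-verified Lean document; each statement's English description precedes it below -/
import Mathlib

section
/- Let F(T) ∈ ℤ[T] be a nonconstant polynomial of degree D. There exists a constant c > 0 (depending only on F) such that for every positive integer q with α(q) ≠ 0, one has α(q) ≥ c·(log log 3q)^{−D}. -/
/-- `α(q) = (1/φ(q)) · #{a mod q : gcd(a·F(a), q) = 1}`. -/
noncomputable def alpha (F : Polynomial ℤ) (q : ℕ) : ℝ :=
  (Set.ncard {a : ℕ | a < q ∧ Int.gcd ((a : ℤ) * F.eval (a : ℤ)) (q : ℤ) = 1} : ℝ)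
    / (Nat.totient q : ℝ)


lemma sum_log_primeFactors_le (n : ℕ) (hn : 0 < n) :
    ∑ p ∈ n.primeFactors, Real.log p ≤ Real.log n := by
  rw [← Real.log_prod (fun p hp => by
    have := (Nat.prime_of_mem_primeFactors hp).pos
    positivity)]
  apply Real.log_le_log
  · apply Finset.prod_pos
    intro p hp
    have := (Nat.prime_of_mem_primeFactors hp).pos
    positivity
  · have := Nat.le_of_dvd hn (Nat.prod_primeFactors_dvd n)
    rw [← Nat.cast_prod]
    exact Nat.cast_le.2 this

lemma sum_log_div_le (S : Finset ℕ) (N : ℕ) (hN : 0 < N) (hS : ∀ p ∈ S, p.Prime ∧ p ≤ N) :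
    ∑ p ∈ S, Real.log p / p ≤ 2 * Real.log N := by
  have hN' : (0 : ℝ) < N := by exact_mod_cast hN
  have h1 : ∀ p ∈ S, (N : ℝ) * (Real.log p / p) ≤
      2 * ∑ n ∈ Finset.Ioc 0 N with p ∣ n, Real.log p := by
    intro p hp
    obtain ⟨hpp, hpN⟩ := hS p hp
    rw [Finset.sum_const, Nat.Ioc_filter_dvd_card_eq_div, nsmul_eq_mul]
    have hp0 : (0 : ℝ) < p := by exact_mod_cast hpp.pos
    have hlog : 0 ≤ Real.log p := Real.log_natCast_nonneg p
    have : (N : ℝ) ≤ 2 * (N / p : ℕ) * p := by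
      have h1 : 1 ≤ N / p := (Nat.one_le_div_iff hpp.pos).2 hpN
      have h2 := Nat.div_add_mod N p
      have h3 := Nat.mod_lt N hpp.pos
      have : N ≤ 2 * (N / p) * p := by nlinarith
      exact_mod_cast this
    rw [← mul_div_assoc, div_le_iff₀ hp0]
    nlinarith
  have h2 : ∑ p ∈ S, ∑ n ∈ Finset.Ioc 0 N with p ∣ n, Real.log p ≤ N * Real.log N := by
    simp_rw [Finset.sum_filter]
    rw [Finset.sum_comm]
    calc _ ≤ ∑ n ∈ Finset.Ioc 0 N, Real.log N := by
          apply Finset.sum_le_sum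
          intro n hn
          rw [Finset.mem_Ioc] at hn
          rw [← Finset.sum_filter]
          calc _ ≤ ∑ p ∈ n.primeFactors, Real.log p := by
                apply Finset.sum_le_sum_of_subset_of_nonneg
                · intro p hp
                  rw [Finset.mem_filter] at hp
                  exact Nat.mem_primeFactors.2 ⟨(hS p hp.1).1, hp.2, hn.1.ne'⟩
                · intro p _ _
                  exact Real.log_natCast_nonneg p
            _ ≤ Real.log n := sum_log_primeFactors_le n hn.1
            _ ≤ Real.log N := by
                apply Real.log_le_log (by exact_mod_cast hn.1)
                exact_mod_cast hn.2
      _ = _ := by simp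
  have h3 := Finset.sum_le_sum h1
  rw [← Finset.mul_sum, ← Finset.mul_sum] at h3
  have : (N : ℝ) * ∑ p ∈ S, Real.log p / p ≤ N * (2 * Real.log N) := by linarith
  exact le_of_mul_le_mul_left this hN'

lemma sum_rpow_le (S : Finset ℕ) (hS : ∀ p ∈ S, p.Prime) (σ : ℝ) (hσ : 0 < σ) :
    ∑ p ∈ S, (p : ℝ) ^ (-(1 + σ)) ≤ Real.log (1 + 1 / σ) := by
  let f : ℕ →* ℝ :=
    { toFun := fun n => (n : ℝ) ^ (-(1 + σ))
      map_one' := by simp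
      map_mul' := fun a b => by
        push_cast
        exact Real.mul_rpow (by positivity) (by positivity) }
  have hf : ∀ n : ℕ, f n = (n : ℝ) ^ (-(1 + σ)) := fun _ => rfl
  have hsum : Summable f := Real.summable_nat_rpow.2 (by linarith)
  have hf0 : ∀ n, 0 ≤ f n := fun n => by rw [hf]; positivity
  have h1 := EulerProduct.prod_filter_prime_geometric_eq_tsum_factoredNumbers hsum S
  rw [Finset.filter_true_of_mem hS] at h1
  have h2 : ∑' m : Nat.factoredNumbers S, f m ≤ ∑' n, f n :=
    hsum.tsum_subtype_le (fun n => f n) _ hf0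
  have h3 : ∑' n, f n ≤ 1 + 1 / σ := by
    rw [hsum.tsum_eq_zero_add, hf 0]
    have h := ZetaAsymptotics.zeta_limit_aux1 (s := 1 + σ) (by linarith)
    have ht : 0 ≤ ZetaAsymptotics.termTSum (1 + σ) :=
      tsum_nonneg fun n => ZetaAsymptotics.term_nonneg _ _
    have he : ∑' n : ℕ, f (n + 1) = ∑' n : ℕ, 1 / (n + 1 : ℝ) ^ (1 + σ) := by
      congr 1; ext n
      rw [hf, Real.rpow_neg (by positivity)]
      push_cast
      simp
    rw [he, Nat.cast_zero, Real.zero_rpow (by linarith)]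
    have h5 : 0 ≤ (1 + σ) * ZetaAsymptotics.termTSum (1 + σ) := by positivity
    rw [add_sub_cancel_left] at h
    linarith
  rw [Real.le_log_iff_exp_le (by positivity), Real.exp_sum]
  refine le_trans ?_ (h1.le.trans (h2.trans h3))
  apply Finset.prod_le_prod
  · intros; positivity
  · intro p hp
    rw [← hf]
    have hlt : f p < 1 := by
      rw [hf]
      apply Real.rpow_lt_one_of_one_lt_of_neg
      · exact_mod_cast (hS p hp).one_lt
      · linarith
    rw [← neg_neg (f p), Real.exp_neg]
    apply inv_anti₀ (by linarith)
    have := Real.add_one_le_exp (-f p)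
    linarith

lemma one_lt_log_three : 1 < Real.log 3 := by
  rw [Real.lt_log_iff_exp_lt (by norm_num)]
  exact Real.exp_one_lt_three

lemma sum_inv_le : ∃ C : ℝ, ∀ q : ℕ, 0 < q →
    ∑ p ∈ q.primeFactors, 1 / (p : ℝ) ≤ Real.log (Real.log (Real.log (3 * q))) + C := by
  set L₀ := Real.log (Real.log 3) with hL₀
  have hL₀pos : 0 < L₀ := Real.log_pos one_lt_log_three
  refine ⟨Real.log (1 + 1 / L₀) + 2 + 1 / L₀, fun q hq => ?_⟩
  have hq1 : (1 : ℝ) ≤ q := by exact_mod_cast hq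
  set y := Real.log (3 * q) with hy
  have hy3 : Real.log 3 ≤ y := Real.log_le_log (by norm_num) (by linarith)
  have hy1 : 1 < y := lt_of_lt_of_le one_lt_log_three hy3
  set L := Real.log y with hL
  have hLL : L₀ ≤ L := Real.log_le_log (by linarith [one_lt_log_three]) hy3
  have hLpos : 0 < L := by linarith
  have hqy : Real.log q ≤ y := Real.log_le_log (by linarith) (by linarith)
  have hA : ∑ p ∈ q.primeFactors, Real.log p / p ≤ 2 * L + 1 := by
    rw [← Finset.sum_filter_add_sum_filter_not q.primeFactors (fun p => p ≤ ⌊y⌋₊)]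
    apply add_le_add
    · have hN : 0 < ⌊y⌋₊ := Nat.floor_pos.2 hy1.le
      refine (sum_log_div_le _ ⌊y⌋₊ hN ?_).trans ?_
      · intro p hp
        rw [Finset.mem_filter] at hp
        exact ⟨Nat.prime_of_mem_primeFactors hp.1, hp.2⟩
      · have : Real.log ⌊y⌋₊ ≤ L :=
          Real.log_le_log (by exact_mod_cast hN) (Nat.floor_le (by linarith))
        linarith
    · calc _ ≤ ∑ p ∈ q.primeFactors with ¬ p ≤ ⌊y⌋₊, Real.log p / y := by
            apply Finset.sum_le_sum
            intro p hp
            rw [Finset.mem_filter, not_le] at hp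
            have : y < p := (Nat.floor_lt (by linarith)).1 hp.2
            exact div_le_div_of_nonneg_left (Real.log_natCast_nonneg p) (by linarith) this.le
        _ ≤ ∑ p ∈ q.primeFactors, Real.log p / y := by
            apply Finset.sum_le_sum_of_subset_of_nonneg (Finset.filter_subset _ _)
            intro p _ _
            exact div_nonneg (Real.log_natCast_nonneg p) (by linarith)
        _ ≤ 1 := by
            rw [← Finset.sum_div, div_le_one (by linarith)]
            exact (sum_log_primeFactors_le q hq).trans hqy
  have hB := sum_rpow_le q.primeFactors (fun p hp => Nat.prime_of_mem_primeFactors hp) (1 / L)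
    (by positivity)
  have hC : ∀ p ∈ q.primeFactors,
      1 / (p : ℝ) ≤ (p : ℝ) ^ (-(1 + 1 / L)) + 1 / L * (Real.log p / p) := by
    intro p hp
    have hp0 : (0 : ℝ) < p := by exact_mod_cast (Nat.prime_of_mem_primeFactors hp).pos
    rw [neg_add, Real.rpow_add hp0, Real.rpow_neg_one, Real.rpow_def_of_pos hp0]
    have := Real.add_one_le_exp (Real.log p * -(1 / L))
    have h2 : (p : ℝ)⁻¹ * (Real.log p * -(1 / L) + 1) ≤
      (p : ℝ)⁻¹ * Real.exp (Real.log p * -(1 / L)) := by gcongr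
    have h3 : 1 / (p : ℝ) =
      (p : ℝ)⁻¹ * (Real.log p * -(1 / L) + 1) + 1 / L * (Real.log p / p) := by
      field_simp; ring
    linarith
  have hD := Finset.sum_le_sum hC
  rw [Finset.sum_add_distrib, ← Finset.mul_sum] at hD
  have hE : 1 / L * ∑ p ∈ q.primeFactors, Real.log p / p ≤ 2 + 1 / L := by
    calc _ ≤ 1 / L * (2 * L + 1) := by gcongr
      _ = _ := by field_simp
  have hF : Real.log (1 + 1 / (1 / L)) ≤ Real.log L + Real.log (1 + 1 / L₀) := by
    rw [← Real.log_mul hLpos.ne' (by positivity)]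
    apply Real.log_le_log (by positivity)
    rw [one_div_one_div, mul_add, mul_one, add_comm]
    have : 1 ≤ L * (1 / L₀) := by rw [mul_one_div, le_div_iff₀ hL₀pos]; linarith
    linarith
  have hG : 1 / L ≤ 1 / L₀ := one_div_le_one_div_of_le hL₀pos hLL
  linarith


/-- `a` is admissible modulo `q`. -/
def adm (F : Polynomial ℤ) (q a : ℕ) : Prop :=
  Int.gcd ((a : ℤ) * F.eval (a : ℤ)) (q : ℤ) = 1

instance (F : Polynomial ℤ) (q : ℕ) : DecidablePred (adm F q) := fun a => by
  unfold adm; infer_instance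

lemma adm_congr (F : Polynomial ℤ) (q a b : ℕ) (h : a ≡ b [MOD q]) : adm F q a ↔ adm F q b := by
  have h1 : (a : ℤ) ≡ b [ZMOD q] := (Int.natCast_modEq_iff).2 h
  have h2 : F.eval (a : ℤ) ≡ F.eval (b : ℤ) [ZMOD q] := by
    rw [Int.modEq_iff_dvd] at h1 ⊢
    exact h1.trans (Polynomial.sub_dvd_eval_sub _ _ _)
  have h3 := h1.mul h2
  unfold adm
  rw [← Int.gcd_emod, h3, Int.gcd_emod]

lemma adm_mul (F : Polynomial ℤ) (m n a : ℕ) : adm F (m * n) a ↔ adm F m a ∧ adm F n a := by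
  unfold adm
  rw [← Int.isCoprime_iff_gcd_eq_one, ← Int.isCoprime_iff_gcd_eq_one,
    ← Int.isCoprime_iff_gcd_eq_one, Nat.cast_mul, IsCoprime.mul_right_iff]

/-- the number of admissible residues. -/
def cnt (F : Polynomial ℤ) (q : ℕ) : ℕ := ((Finset.range q).filter (adm F q)).card

lemma cnt_mul_of_dvd (F : Polynomial ℤ) (p n : ℕ) (h : p ∣ n) : cnt F (p * n) = p * cnt F n := by
  have h1 : ∀ a, adm F (p * n) a ↔ adm F n a := by
    intro a
    rw [adm_mul]
    obtain ⟨k, rfl⟩ := h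
    rw [adm_mul]; tauto
  have h2 : ∀ k, Nat.count (adm F n) (k * n) = k * Nat.count (adm F n) n := by
    intro k
    induction k with
    | zero => simp
    | succ k ih =>
      rw [Nat.succ_mul, Nat.count_add, ih, Nat.succ_mul]
      congr 1
      rw [Nat.count_eq_card_filter_range, Nat.count_eq_card_filter_range]
      congr 1
      ext a
      simp only [Finset.mem_filter, adm_congr F n (k * n + a) a (by simp [Nat.ModEq])]
  unfold cnt
  rw [← Nat.count_eq_card_filter_range, ← Nat.count_eq_card_filter_range, ← h2,
    Nat.count_eq_card_filter_range, Nat.count_eq_card_filter_range]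
  congr 1
  ext a
  simp [h1]

lemma cnt_mul_of_coprime (F : Polynomial ℤ) (m n : ℕ) (hm : 0 < m) (hn : 0 < n)
    (h : m.Coprime n) : cnt F (m * n) = cnt F m * cnt F n := by
  unfold cnt
  rw [← Finset.card_product]
  apply Finset.card_nbij (fun a => (a % m, a % n))
  · intro a ha
    simp only [Finset.coe_filter, Finset.mem_range, Set.mem_ofPred_eq, adm_mul] at ha
    simp only [Finset.coe_product, Finset.coe_filter, Finset.mem_range, Set.mem_prod,
      Set.mem_ofPred_eq]
    exact ⟨⟨Nat.mod_lt _ hm, (adm_congr F m _ _ (Nat.mod_modEq a m)).2 ha.2.1⟩,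
      ⟨Nat.mod_lt _ hn, (adm_congr F n _ _ (Nat.mod_modEq a n)).2 ha.2.2⟩⟩
  · intro a ha b hb hab
    simp only [Finset.coe_filter, Finset.mem_range, Set.mem_ofPred_eq] at ha hb
    simp only [Prod.mk.injEq] at hab
    have : a ≡ b [MOD m * n] := (Nat.modEq_and_modEq_iff_modEq_mul h).1 hab
    exact this.eq_of_lt_of_lt ha.1 hb.1
  · rintro ⟨x, y⟩ hxy
    simp only [Finset.coe_product, Finset.coe_filter, Finset.mem_range, Set.mem_prod,
      Set.mem_ofPred_eq] at hxy
    obtain ⟨⟨hx, hx'⟩, ⟨hy, hy'⟩⟩ := hxy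
    refine ⟨Nat.chineseRemainder h x y, ?_, ?_⟩
    · simp only [Finset.coe_filter, Finset.mem_range, Set.mem_ofPred_eq, adm_mul]
      exact ⟨Nat.chineseRemainder_lt_mul h x y hm.ne' hn.ne',
        (adm_congr F m _ _ (Nat.chineseRemainder h x y).2.1).2 hx',
        (adm_congr F n _ _ (Nat.chineseRemainder h x y).2.2).2 hy'⟩
    · have h1 := (Nat.chineseRemainder h x y).2.1
      have h2 := (Nat.chineseRemainder h x y).2.2
      simp only [Prod.mk.injEq]
      exact ⟨Eq.trans h1 (Nat.mod_eq_of_lt hx), Eq.trans h2 (Nat.mod_eq_of_lt hy)⟩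

lemma cnt_div_totient (F : Polynomial ℤ) (q : ℕ) (hq : q ≠ 0) :
    (cnt F q : ℝ) / q.totient = ∏ p ∈ q.primeFactors, (cnt F p : ℝ) / ((p : ℝ) - 1) := by
  induction q using induction_on_primes with
  | zero => exact absurd rfl hq
  | one => simp [cnt, adm, Finset.filter_singleton]
  | prime_mul p n hp ih =>
    have hn : n ≠ 0 := by rintro rfl; simp at hq
    have ih := ih hn
    have hp0 : (p : ℝ) ≠ 0 := by exact_mod_cast hp.ne_zero
    by_cases hd : p ∣ n
    · rw [cnt_mul_of_dvd F p n hd, Nat.totient_mul_of_prime_of_dvd hp hd, Nat.cast_mul,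
        Nat.cast_mul, mul_div_mul_left _ _ hp0, ih, Nat.primeFactors_mul hp.ne_zero hn,
        hp.primeFactors, Finset.union_eq_right.2]
      simp [hp, hd, hn]
    · have hc : p.Coprime n := (Nat.Prime.coprime_iff_not_dvd hp).2 hd
      rw [cnt_mul_of_coprime F p n hp.pos (Nat.pos_of_ne_zero hn) hc, Nat.totient_mul hc,
        Nat.cast_mul, Nat.cast_mul, mul_div_mul_comm, ih, hc.primeFactors_mul,
        Finset.prod_union hc.disjoint_primeFactors, hp.primeFactors, Finset.prod_singleton,
        Nat.totient_prime hp, Nat.cast_sub hp.one_le, Nat.cast_one]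

lemma cnt_prime_ge (F : Polynomial ℤ) (p : ℕ) (hp : p.Prime) (h : cnt F p ≠ 0) :
    p ≤ cnt F p + 1 + F.natDegree := by
  have := Fact.mk hp
  set G := F.map (Int.castRingHom (ZMod p)) with hG
  have key : ∀ a : ℕ, adm F p a ↔ (a : ZMod p) ≠ 0 ∧ G.eval (a : ZMod p) ≠ 0 := by
    intro a
    have h1 : G.eval (a : ZMod p) = ((F.eval (a : ℤ) : ℤ) : ZMod p) := by
      have := Polynomial.eval_map_apply (p := F) (Int.castRingHom (ZMod p)) (a : ℤ)
      rw [eq_intCast, eq_intCast, Int.cast_natCast] at this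
      exact this
    unfold adm
    rw [← Int.isCoprime_iff_gcd_eq_one, isCoprime_comm,
      Prime.coprime_iff_not_dvd (Nat.prime_iff_prime_int.1 hp), ← ZMod.intCast_zmod_eq_zero_iff_dvd,
      h1, ← mul_ne_zero_iff]
    push_cast; rfl
  have hG0 : G ≠ 0 := by
    intro h0
    apply h
    unfold cnt
    rw [Finset.card_eq_zero, Finset.filter_eq_empty_iff]
    intro a _
    rw [key, h0]; simp
  have hb : ((Finset.range p).filter (fun a => ¬ adm F p a)).card ≤ 1 + F.natDegree := by
    calc _ ≤ (insert 0 G.roots.toFinset).card := by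
          apply Finset.card_le_card_of_injOn (fun a : ℕ => (a : ZMod p))
          · intro a ha
            simp only [Finset.coe_filter, Set.mem_ofPred_eq, key] at ha
            simp only [Finset.coe_insert, Set.mem_insert_iff, Finset.mem_coe, Multiset.mem_toFinset,
              Polynomial.mem_roots hG0, Polynomial.IsRoot.def]
            tauto
          · intro a ha b hb hab
            simp only [Finset.coe_filter, Finset.mem_range, Set.mem_ofPred_eq] at ha hb
            have := (ZMod.natCast_eq_natCast_iff a b p).1 hab
            exact this.eq_of_lt_of_lt ha.1 hb.1
      _ ≤ G.roots.toFinset.card + 1 := Finset.card_insert_le _ _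
      _ ≤ 1 + F.natDegree := by
          have h1 := G.roots.toFinset_card_le
          have h2 := G.card_roots'
          have h3 : G.natDegree ≤ F.natDegree := Polynomial.natDegree_map_le
          omega
  have hs := Finset.card_filter_add_card_filter_not (s := Finset.range p) (adm F p)
  rw [Finset.card_range] at hs
  unfold cnt
  omega

lemma factor_ge (D : ℕ) (p g : ℕ) (hp : p.Prime) (hg : g ≠ 0) (h : p ≤ g + 1 + D) :
    Real.exp (-(D * (1 / (p : ℝ)) + (2 * D + 2) ^ 3 * (1 / (p : ℝ) ^ 2))) ≤
      (g : ℝ) / ((p : ℝ) - 1) := by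
  have hp2 : (2 : ℝ) ≤ p := by exact_mod_cast hp.two_le
  have hg1 : (1 : ℝ) ≤ g := by exact_mod_cast Nat.pos_of_ne_zero hg
  have hh : (p : ℝ) ≤ g + 1 + D := by exact_mod_cast h
  have hD : (0 : ℝ) ≤ D := by positivity
  rcases le_or_gt (p : ℝ) (2 * D + 2) with hs | hs
  · have h1 : (p : ℝ) ≤ (2 * D + 2) ^ 3 * (1 / (p : ℝ) ^ 2) := by
      rw [mul_one_div, le_div_iff₀ (by positivity), ← pow_succ']
      gcongr
    calc _ ≤ Real.exp (-(p : ℝ)) := by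
          apply Real.exp_le_exp.2
          have : 0 ≤ (D : ℝ) * (1 / (p : ℝ)) := by positivity
          linarith
      _ = (Real.exp p)⁻¹ := Real.exp_neg _
      _ ≤ (p - 1 : ℝ)⁻¹ := by
          apply inv_anti₀ (by linarith)
          have := Real.add_one_le_exp (p : ℝ)
          linarith
      _ ≤ _ := by
          rw [inv_eq_one_div]
          apply div_le_div_of_nonneg_right hg1 (by linarith)
  · have h0 : (0 : ℝ) < p - 1 - D := by linarith
    have h1 : (0 : ℝ) < p - 1 := by linarith
    calc _ ≤ (p - 1 - D : ℝ) / (p - 1) := by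
          rw [← Real.le_log_iff_exp_le (by positivity)]
          refine le_trans ?_ (Real.one_sub_inv_le_log_of_pos (by positivity))
          have e : 1 - ((p - 1 - D : ℝ) / (p - 1))⁻¹ =
              -(D * (1 / (p : ℝ)) + (D * (D + 1)) * (1 / (p * (p - 1 - D)))) := by
            field_simp; ring
          rw [e]
          apply neg_le_neg
          refine add_le_add le_rfl ?_
          rw [mul_one_div, mul_one_div, div_le_div_iff₀ (by positivity) (by positivity)]
          have h3 : (p : ℝ) ≤ 2 * (p - 1 - D) := by linarith
          have h4 : 2 * ((D : ℝ) * (D + 1)) ≤ (2 * D + 2) ^ 3 := by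
            ring_nf; nlinarith [pow_nonneg hD 2, pow_nonneg hD 3]
          calc (D : ℝ) * (D + 1) * p ^ 2 = (D * (D + 1)) * p * p := by ring
            _ ≤ (D * (D + 1)) * p * (2 * (p - 1 - D)) := by gcongr
            _ = (2 * (D * (D + 1))) * (p * (p - 1 - D)) := by ring
            _ ≤ _ := by gcongr
      _ ≤ _ := by
          apply div_le_div_of_nonneg_right _ h1.le
          linarith


/-- **Estimate (1.5).** If `F` is nonconstant of degree `D`, then whenever `α(q) ≠ 0`, one has
`α(q) ≫_F (log log 3q)^{-D}`. -/
theorem stmt10 (F : Polynomial ℤ) (hFdeg : 0 < F.natDegree) :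
    ∃ c : ℝ, 0 < c ∧ ∀ q : ℕ, 0 < q → alpha F q ≠ 0 →
      c * Real.log (Real.log (3 * (q : ℝ))) ^ (-(F.natDegree : ℝ)) ≤ alpha F q := by
  obtain ⟨C, hC⟩ := sum_inv_le
  set D := F.natDegree with hD
  set Z : ℝ := ∑' n : ℕ, 1 / (n : ℝ) ^ 2 with hZ
  refine ⟨Real.exp (-(D * C + (2 * D + 2) ^ 3 * Z)), Real.exp_pos _, fun q hq hne => ?_⟩
  have hα : alpha F q = ∏ p ∈ q.primeFactors, (cnt F p : ℝ) / ((p : ℝ) - 1) := by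
    rw [← cnt_div_totient F q hq.ne']
    unfold alpha cnt
    rw [← Set.ncard_coe_finset]
    simp [adm]
  rw [hα] at hne ⊢
  rw [Finset.prod_ne_zero_iff] at hne
  have hq1 : (1 : ℝ) ≤ q := by exact_mod_cast hq
  have hy3 : Real.log 3 ≤ Real.log (3 * q) := Real.log_le_log (by norm_num) (by linarith)
  have hL : 0 < Real.log (Real.log (3 * (q : ℝ))) :=
    Real.log_pos (lt_of_lt_of_le one_lt_log_three hy3)
  have hZq : ∑ p ∈ q.primeFactors, 1 / (p : ℝ) ^ 2 ≤ Z :=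
    (Real.summable_one_div_nat_pow.2 (by norm_num : 1 < 2)).sum_le_tsum _
      (fun _ _ => by positivity)
  calc _ = Real.exp (-(D * (Real.log (Real.log (Real.log (3 * (q : ℝ)))) + C)
            + (2 * D + 2) ^ 3 * Z)) := by
        rw [Real.rpow_def_of_pos hL, ← Real.exp_add]
        congr 1; ring
    _ ≤ Real.exp (∑ p ∈ q.primeFactors,
          -(D * (1 / (p : ℝ)) + (2 * D + 2) ^ 3 * (1 / (p : ℝ) ^ 2))) := by
        apply Real.exp_le_exp.2
        rw [Finset.sum_neg_distrib, Finset.sum_add_distrib, ← Finset.mul_sum, ← Finset.mul_sum]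
        apply neg_le_neg
        gcongr
        exact hC q hq
    _ = ∏ p ∈ q.primeFactors,
          Real.exp (-(D * (1 / (p : ℝ)) + (2 * D + 2) ^ 3 * (1 / (p : ℝ) ^ 2))) :=
        Real.exp_sum _ _
    _ ≤ _ := by
        apply Finset.prod_le_prod
        · intros; positivity
        · intro p hp
          have hpp := Nat.prime_of_mem_primeFactors hp
          have hg : cnt F p ≠ 0 := by
            intro h0
            apply hne p hp
            simp [h0]
          exact factor_ge D p (cnt F p) hpp hg (cnt_prime_ge F p hpp hg)
end

section
/- Let F(T) ∈ ℤ[T] be a nonconstant polynomial of degree D with no multiple roots. Let ℓ be an odd prime with ℓ > 2D + 1 that does not divide the leading coefficient of F and does not divide the discriminant of T·F(T) (the discriminant of F if F(0) = 0). Let e ≥ 1 and J ≥ D + 2 be integers and let w be a unit modulo ℓ^e. Set V = #{(v₁, …, v_J) ∈ ((ℤ/ℓ^eℤ)^×)^J : ∏_{i=1}^J F(v_i) ≡ w (mod ℓ^e)}. Then |φ(ℓ^e)·V − (φ(ℓ^e)·α(ℓ^e))^J| ≤ 2·(4D)^J·ℓ^{1 − J/(D+1)}·(φ(ℓ^e)·α(ℓ^e))^J.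 -/
section AuxHelpers
open Polynomial



/-- bounded power sums force the entries into the unit disc -/
lemma aux_norm_le_one_of_power_sums (s : Multiset ℂ) (C : ℝ)
    (h : ∀ n : ℕ, 1 ≤ n → ‖(s.map (fun z => z ^ n)).sum‖ ≤ C) :
    ∀ z ∈ s, ‖z‖ ≤ 1 := by
  classical
  intro z hz
  -- for any polynomial Q, the sums Σ Q(z) z^n are bounded
  have key : ∀ Q : ℂ[X], ∃ C' : ℝ, ∀ n : ℕ, 1 ≤ n →
      ‖(s.map (fun z => Q.eval z * z ^ n)).sum‖ ≤ C' := by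
    intro Q
    induction Q using Polynomial.induction_on' with
    | add p q hp hq =>
      obtain ⟨c1, h1⟩ := hp
      obtain ⟨c2, h2⟩ := hq
      refine ⟨c1 + c2, fun n hn => ?_⟩
      simp only [eval_add, add_mul, Multiset.sum_map_add]
      exact (norm_add_le _ _).trans (add_le_add (h1 n hn) (h2 n hn))
    | monomial k a =>
      refine ⟨‖a‖ * C, fun n hn => ?_⟩
      have : (s.map (fun z => (monomial k a).eval z * z ^ n)).sum
          = a * (s.map (fun z => z ^ (k + n))).sum := by
        rw [← Multiset.sum_map_mul_left]
        congr 1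
        apply Multiset.map_congr rfl
        intro x _
        simp [eval_monomial, pow_add, mul_assoc]
      rw [this, norm_mul]
      exact mul_le_mul_of_nonneg_left (h _ (by omega)) (norm_nonneg _)
  let Q : ℂ[X] := Lagrange.interpolate s.toFinset id (fun w => if w = z then 1 else 0)
  have hQ : ∀ w ∈ s, Q.eval w = if w = z then 1 else 0 := by
    intro w hw
    have := Lagrange.eval_interpolate_at_node (s := s.toFinset) (v := id)
      (fun w => if w = z then (1:ℂ) else 0) (Set.injOn_id _) (Multiset.mem_toFinset.2 hw)
    simpa [Q] using this
  obtain ⟨C', hC'⟩ := key Q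
  have hsum : ∀ n : ℕ, (s.map (fun w => Q.eval w * w ^ n)).sum = (s.count z : ℂ) * z ^ n := by
    intro n
    have : s.map (fun w => Q.eval w * w ^ n) = s.map (fun w => if w = z then z ^ n else 0) := by
      apply Multiset.map_congr rfl
      intro w hw
      rw [hQ w hw]
      split_ifs with h
      · rw [h, one_mul]
      · rw [zero_mul]
    rw [this, Finset.sum_multiset_map_count, Finset.sum_eq_single z]
    · simp
    · intro b _ hb; simp [hb]
    · intro hb; simp at hb; exact absurd hz hb
  by_contra hlt
  push Not at hlt
  obtain ⟨n, hn⟩ := ((tendsto_pow_atTop_atTop_of_one_lt hlt).eventually_gt_atTop C').and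
    (Filter.eventually_ge_atTop 1) |>.exists
  have h1 := hC' n hn.2
  rw [hsum, norm_mul, norm_pow, Complex.norm_natCast] at h1
  have h2 : (1:ℝ) ≤ s.count z := by
    exact_mod_cast Multiset.one_le_count_iff_mem.2 hz
  nlinarith [hn.1, pow_nonneg (norm_nonneg z) n]

/-- scaled version, along multiples of `N` -/
lemma aux_norm_le_of_power_sums (s : Multiset ℂ) (C ρ : ℝ) (hρ : 0 < ρ) (N : ℕ) (hN : 1 ≤ N)
    (h : ∀ n : ℕ, 1 ≤ n → ‖(s.map (fun z => z ^ (N * n))).sum‖ ≤ C * ρ ^ (N * n)) :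
    ∀ z ∈ s, ‖z‖ ≤ ρ := by
  intro z hz
  have := aux_norm_le_one_of_power_sums (s.map (fun z => (z / ρ) ^ N)) C ?_ ((z / ρ) ^ N)
    (Multiset.mem_map_of_mem _ hz)
  · rw [norm_pow] at this
    have h2 : ‖z / ρ‖ ≤ 1 := by
      by_contra hh
      push Not at hh
      exact absurd this (not_le.2 (one_lt_pow₀ hh (by omega)))
    rw [norm_div, Complex.norm_real, Real.norm_of_nonneg hρ.le, div_le_one hρ] at h2
    exact h2
  · intro n hn
    rw [Multiset.map_map]
    have : (s.map ((fun z => z ^ n) ∘ fun z => (z / (ρ:ℂ)) ^ N)).sum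
        = ((ρ:ℂ) ^ (N * n))⁻¹ * (s.map (fun z => z ^ (N * n))).sum := by
      rw [← Multiset.sum_map_mul_left]
      congr 1
      apply Multiset.map_congr rfl
      intro x _
      simp only [Function.comp]
      rw [← pow_mul, div_pow, div_eq_inv_mul]
    rw [this, norm_mul, norm_inv, norm_pow, Complex.norm_real, Real.norm_of_nonneg hρ.le,
      inv_mul_le_iff₀ (by positivity), mul_comm _ C]
    exact h n hn

/-- log derivative of a product of linear factors -/
lemma aux_logderiv (s : Multiset ℂ) :
    PowerSeries.X * PowerSeries.derivative ℂ ((s.map (fun z => (1 - PowerSeries.C z * PowerSeries.X))).prod)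
      = - (PowerSeries.mk (fun n => if n = 0 then 0 else (s.map (fun z => z ^ n)).sum)) *
        (s.map (fun z => (1 - PowerSeries.C z * PowerSeries.X))).prod := by
  induction s using Multiset.induction_on with
  | empty =>
    have : (PowerSeries.mk (fun n => if n = 0 then 0 else ((0 : Multiset ℂ).map (fun z => z ^ n)).sum)) = 0 := by
      ext n; simp
    rw [this]; simp
  | cons a s ih =>
    have hgeo : (PowerSeries.mk (fun n => if n = 0 then 0 else a ^ n)) * (1 - PowerSeries.C a * PowerSeries.X)
        = PowerSeries.C a * PowerSeries.X := by
      ext n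
      rw [mul_sub, mul_one, map_sub, mul_comm (PowerSeries.C a), ← mul_assoc, PowerSeries.coeff_mul_C]
      rw [mul_comm PowerSeries.X]
      rw [PowerSeries.coeff_C_mul]
      rcases n with _ | n
      · simp
      · rw [PowerSeries.coeff_succ_mul_X]
        simp only [PowerSeries.coeff_mk, PowerSeries.coeff_X]
        rcases n with _ | n
        · simp
        · simp [pow_succ]
    have hadd : (PowerSeries.mk (fun n => if n = 0 then 0 else ((a ::ₘ s).map (fun z => z ^ n)).sum))
        = (PowerSeries.mk (fun n => if n = 0 then 0 else a ^ n)) +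
          (PowerSeries.mk (fun n => if n = 0 then 0 else (s.map (fun z => z ^ n)).sum)) := by
      ext n
      simp only [PowerSeries.coeff_mk, map_add, Multiset.map_cons, Multiset.sum_cons]
      split_ifs <;> simp
    rw [hadd, Multiset.map_cons, Multiset.prod_cons, Derivation.leibniz]
    simp only [smul_eq_mul]
    have hder : PowerSeries.derivative ℂ (1 - PowerSeries.C a * PowerSeries.X) = - PowerSeries.C a := by
      rw [map_sub, Derivation.leibniz]
      simp [PowerSeries.derivative_C]
    rw [hder]
    generalize (PowerSeries.mk (fun n => if n = 0 then 0 else a ^ n)) = A at *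
    generalize (PowerSeries.mk (fun n => if n = 0 then 0 else (s.map (fun z => z ^ n)).sum)) = B at *
    generalize (s.map (fun z => (1 - PowerSeries.C z * PowerSeries.X))).prod = P at *
    linear_combination (1 - PowerSeries.C a * PowerSeries.X) * ih + P * hgeo

/-- Newton-type recurrence with vanishing tail gives exponential power sums -/
lemma aux_newton (D : ℕ) (hD : 1 ≤ D) (c S : ℕ → ℂ) (h0 : c 0 = 1) (hc : ∀ n, D ≤ n → c n = 0)
    (hrec : ∀ n : ℕ, (n : ℂ) * c n = ∑ k ∈ Finset.Icc 1 n, S k * c (n - k)) :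
    ∃ s : Multiset ℂ, s.card ≤ D - 1 ∧ ∀ n, 1 ≤ n → S n = - (s.map (fun z => z ^ n)).sum := by
  let L : ℂ[X] := ∑ i ∈ Finset.range D, C (c i) * X ^ i
  have hLc : ∀ n, L.coeff n = c n := by
    intro n
    simp only [L, finsetSum_coeff, coeff_C_mul, coeff_X_pow, mul_ite, mul_one, mul_zero]
    rw [Finset.sum_ite_eq]
    split_ifs with h
    · rfl
    · rw [hc n (by simpa using h)]
  have hL0 : L ≠ 0 := by
    intro h
    have := hLc 0
    rw [h, h0] at this; simp at this
  have hLdeg : L.natDegree ≤ D - 1 := by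
    rw [natDegree_le_iff_coeff_eq_zero]
    intro n hn
    rw [hLc, hc n (by omega)]
  have hr0 : ∀ r ∈ L.roots, r ≠ 0 := by
    intro r hr h
    rw [mem_roots hL0, h, IsRoot, ← coeff_zero_eq_eval_zero, hLc, h0] at hr
    exact one_ne_zero hr
  let s : Multiset ℂ := L.roots.map (fun r => r⁻¹)
  have hprod : ∀ t : Multiset ℂ, (∀ r ∈ t, r ≠ 0) →
     ∃ a : ℂ, (((t.map (fun r => X - C r)).prod : ℂ[X]) : PowerSeries ℂ) =
      PowerSeries.C a * ((t.map (fun r => r⁻¹)).map (fun z => (1 - PowerSeries.C z * PowerSeries.X))).prod := by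
    intro t
    induction t using Multiset.induction_on with
    | empty => intro _; exact ⟨1, by simp⟩
    | cons b t ih =>
      intro ht
      obtain ⟨a, ha⟩ := ih (fun r hr => ht r (Multiset.mem_cons_of_mem hr))
      have hb := ht b (Multiset.mem_cons_self _ _)
      refine ⟨-b * a, ?_⟩
      simp only [Multiset.map_cons, Multiset.prod_cons, Polynomial.coe_mul, ha]
      have : ((X - C b : ℂ[X]) : PowerSeries ℂ) = PowerSeries.C (-b) * (1 - PowerSeries.C b⁻¹ * PowerSeries.X) := by
        rw [mul_sub, ← mul_assoc, ← map_mul]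
        have : -b * b⁻¹ = -1 := by field_simp
        rw [this]; simp; ring
      rw [this, map_mul]; ring
  obtain ⟨a, ha⟩ := hprod L.roots hr0
  have hsplit : L = C L.leadingCoeff * (L.roots.map (fun r => X - C r)).prod :=
    (IsAlgClosed.splits L).eq_prod_roots
  have hLps : (L : PowerSeries ℂ) = PowerSeries.C (L.leadingCoeff * a) *
      (s.map (fun z => (1 - PowerSeries.C z * PowerSeries.X))).prod := by
    conv_lhs => rw [hsplit]
    rw [Polynomial.coe_mul, ha, Polynomial.coe_C, map_mul]; ring
  refine ⟨s, ?_, ?_⟩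
  · simp only [s, Multiset.card_map]
    exact (card_roots' L).trans hLdeg
  · let Sp : PowerSeries ℂ := PowerSeries.mk (fun n => if n = 0 then 0 else S n)
    have h1 : PowerSeries.X * PowerSeries.derivative ℂ (L : PowerSeries ℂ) = Sp * (L : PowerSeries ℂ) := by
      ext n
      have hr : (PowerSeries.coeff n) (Sp * (L : PowerSeries ℂ)) = n * c n := by
        rw [hrec, PowerSeries.coeff_mul, Finset.Nat.sum_antidiagonal_eq_sum_range_succ_mk,
          Finset.range_eq_Ico, Finset.sum_eq_sum_Ico_succ_bot (by omega)]
        simp only [Sp, PowerSeries.coeff_mk, if_true, zero_mul, zero_add]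
        have : Finset.Ico 1 n.succ = Finset.Icc 1 n := by ext; simp
        rw [this]
        apply Finset.sum_congr rfl
        intro k hk
        have : k ≠ 0 := by simp at hk; omega
        simp [this, hLc]
      rw [hr]
      rcases n with _ | n
      · simp
      · rw [mul_comm PowerSeries.X, PowerSeries.coeff_succ_mul_X, PowerSeries.coeff_derivative]
        simp [hLc]; ring
    have h2 : PowerSeries.X * PowerSeries.derivative ℂ (L : PowerSeries ℂ) =
       - (PowerSeries.mk (fun n => if n = 0 then 0 else (s.map (fun z => z ^ n)).sum)) * (L : PowerSeries ℂ) := by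
      rw [hLps, Derivation.leibniz]
      simp only [smul_eq_mul, PowerSeries.derivative_C, mul_zero, add_zero]
      have := aux_logderiv s
      linear_combination PowerSeries.C (L.leadingCoeff * a) * this
    have hne : (L : PowerSeries ℂ) ≠ 0 := by
      simpa using hL0
    have h3 := mul_right_cancel₀ hne (h1.symm.trans h2)
    intro n hn
    have h4 := congrArg (PowerSeries.coeff n) h3
    have hn0 : n ≠ 0 := by omega
    simpa [Sp, hn0] using h4



lemma aux_stepanov0 (K : Type*) [Field K] [Fintype K] [DecidableEq K] (p h Q d E D : ℕ)
    [Fact p.Prime] [CharP K p] (hQp : Q = p ^ h)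
    (hcard : Fintype.card K = Q ^ 2) (hE : d * E + 1 = Q) (hd : 2 ≤ d) (hQ : 2 * D + 3 < Q)
    (f f1 : K[X]) (hf : f = X * f1) (hf1 : f1.eval 0 ≠ 0) (hfD : f.natDegree ≤ D) (u : K) :
    (Finset.univ.filter (fun x : K => f.eval x ≠ 0 ∧ (f.eval x) ^ (E * (Q + 1)) = u)).card
      ≤ Q * (E + 2 * D + 2) := by
  classical
  set B := E + D + 2 with hB
  let ι := Fin B × Fin d × Fin E
  set M := Q * E + D * (d * E) + B with hM
  let z : ι → degreeLT K M := fun t =>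
    ⟨C (u ^ (t.2.1 : ℕ)) * X ^ (Q * (t.2.2 : ℕ) + (t.1 : ℕ)) * f ^ ((d - 1 - (t.2.1 : ℕ)) * E), by
      rw [mem_degreeLT]
      have hE0 : 0 < E := t.2.2.pos
      have h1 : (C (u ^ (t.2.1 : ℕ)) * X ^ (Q * (t.2.2 : ℕ) + (t.1 : ℕ)) *
          f ^ ((d - 1 - (t.2.1 : ℕ)) * E)).natDegree < M := by
        refine lt_of_le_of_lt natDegree_mul_le ?_
        have h2 := natDegree_C_mul_X_pow_le (u ^ (t.2.1 : ℕ)) (Q * (t.2.2 : ℕ) + (t.1 : ℕ))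
        have h3 : (f ^ ((d - 1 - (t.2.1 : ℕ)) * E)).natDegree ≤ (d * E) * D := by
          refine natDegree_pow_le.trans ?_
          exact Nat.mul_le_mul (Nat.mul_le_mul_right _ (by omega)) hfD
        have h4 : Q * (t.2.2 : ℕ) ≤ Q * E := Nat.mul_le_mul_left _ t.2.2.isLt.le
        have h5 := t.1.isLt
        have h6 : (d * E) * D = D * (d * E) := mul_comm _ _
        omega
      exact lt_of_le_of_lt degree_le_natDegree (by exact_mod_cast h1)⟩
  have hnot : ¬ LinearIndependent K z := by
    intro hli
    have h1 := hli.fintype_card_le_finrank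
    rw [(degreeLTEquiv K M).finrank_eq] at h1
    simp only [ι, Fintype.card_prod, Fintype.card_fin, Module.finrank_fintype_fun_eq_card] at h1
    have h2 : B * (d * E) ≤ Q * E + D * (d * E) + B := h1
    have h3 : d * E = Q - 1 := by omega
    have h4 : 2 * E ≤ d * E := Nat.mul_le_mul_right _ hd
    rw [h3] at h2 h4
    obtain ⟨R, rfl⟩ : ∃ R, Q = R + 1 := ⟨Q - 1, by omega⟩
    simp only [Nat.add_sub_cancel] at h2 h4
    rw [hB] at h2
    nlinarith
  rw [Fintype.not_linearIndependent_iff] at hnot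
  obtain ⟨b, hb0, t1, ht1⟩ := hnot
  let wt : ι → ℕ := fun t => (t.2.2 : ℕ) + (t.2.1 : ℕ) * E + Q * (t.1 : ℕ)
  have hwt : Function.Injective wt := by
    rintro ⟨i, j, s⟩ ⟨i', j', s'⟩ hh
    simp only [wt] at hh
    have hs := s.isLt
    have hs' := s'.isLt
    have hE0 : 0 < E := by omega
    have aux : ∀ (j : Fin d) (s : Fin E), (s : ℕ) + (j : ℕ) * E < Q := by
      intro j s
      have : (j : ℕ) * E + E ≤ d * E := by
        rw [← Nat.succ_mul]; exact Nat.mul_le_mul_right _ j.isLt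
      have := s.isLt
      omega
    have hi : (i : ℕ) = i' := by
      have := congrArg (· / Q) hh
      simpa [Nat.add_mul_div_left _ _ (show 0 < Q by omega), Nat.div_eq_of_lt (aux _ _)] using this
    rw [hi] at hh
    have hh2 : (s : ℕ) + E * (j : ℕ) = s' + E * (j' : ℕ) := by
      rw [mul_comm E, mul_comm E]; omega
    have hj : (j : ℕ) = j' := by
      have := congrArg (· / E) hh2
      simpa [Nat.add_mul_div_left _ _ hE0, Nat.div_eq_of_lt s.isLt, Nat.div_eq_of_lt s'.isLt] using this
    rw [hj] at hh2
    have hs3 : (s : ℕ) = s' := by omega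
    ext <;> simp [hi, hj, hs3]
  let W : K[X] := ∑ t : ι, C ((b t) ^ Q) * (X ^ (wt t) * f1 ^ ((t.2.1 : ℕ) * E))
  have hWf : W = ∑ t : ι, C ((b t) ^ Q) * (X ^ ((t.2.2 : ℕ) + Q * (t.1 : ℕ)) * f ^ ((t.2.1 : ℕ) * E)) := by
    refine Finset.sum_congr rfl fun t _ => ?_
    rw [hf, mul_pow]
    simp only [wt]
    ring
  have hW0 : W ≠ 0 := by
    obtain ⟨t0, ht0, hmin⟩ := Finset.exists_min_image (Finset.univ.filter (fun t => b t ≠ 0)) wt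
      ⟨t1, by simp [ht1]⟩
    simp only [Finset.mem_filter, Finset.mem_univ, true_and] at ht0 hmin
    intro hW
    have hc : W.coeff (wt t0) = 0 := by rw [hW]; simp
    simp only [W, finsetSum_coeff, coeff_C_mul] at hc
    rw [Finset.sum_eq_single t0] at hc
    · rw [coeff_X_pow_mul', if_pos le_rfl, Nat.sub_self, coeff_zero_eq_eval_zero, eval_pow] at hc
      have : (b t0) ^ Q * (f1.eval 0) ^ ((t0.2.1 : ℕ) * E) ≠ 0 :=
        mul_ne_zero (pow_ne_zero _ ht0) (pow_ne_zero _ hf1)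
      exact this hc
    · intro t _ htne
      by_cases hbt : b t = 0
      · rw [hbt, zero_pow (by omega), zero_mul]
      · have h1 := hmin t hbt
        have h2 : wt t ≠ wt t0 := fun h => htne (hwt h)
        rw [coeff_X_pow_mul', if_neg (by omega), mul_zero]
    · intro hh; exact absurd (Finset.mem_univ _) hh
  have hWdeg : W.natDegree ≤ Q * (E + 2 * D + 2) := by
    rw [hWf]
    refine natDegree_sum_le_of_forall_le _ _ fun t _ => ?_
    refine (natDegree_C_mul_le _ _).trans ?_
    refine natDegree_mul_le.trans ?_
    have h3 : (f ^ ((t.2.1 : ℕ) * E)).natDegree ≤ (d * E) * D := by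
      refine natDegree_pow_le.trans ?_
      exact Nat.mul_le_mul (Nat.mul_le_mul_right _ t.2.1.isLt.le) hfD
    have h4 : (X ^ ((t.2.2 : ℕ) + Q * (t.1 : ℕ)) : K[X]).natDegree ≤ (t.2.2 : ℕ) + Q * (t.1 : ℕ) :=
      natDegree_X_pow_le _
    have h5 : Q * (t.1 : ℕ) ≤ Q * (E + D + 1) := Nat.mul_le_mul_left _ (by have := t.1.isLt; omega)
    have h6 := t.2.2.isLt
    have h7 : d * E * D ≤ Q * D := Nat.mul_le_mul_right _ (by omega)
    have h8 : E ≤ d * E := Nat.le_mul_of_pos_left _ (by omega)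
    nlinarith
  have hroot : ∀ x : K, f.eval x ≠ 0 → (f.eval x) ^ (E * (Q + 1)) = u → W.eval x = 0 := by
    intro x hx hu
    have hxx : x ^ (Q * Q) = x := by
      rw [← sq, ← hcard]; exact FiniteField.pow_card x
    have hz : ∑ t : ι, b t * (u ^ (t.2.1 : ℕ) * x ^ (Q * (t.2.2 : ℕ) + (t.1 : ℕ)) *
        (f.eval x) ^ ((d - 1 - (t.2.1 : ℕ)) * E)) = 0 := by
      have := congrArg (fun q : degreeLT K M => (q : K[X]).eval x) hb0
      simpa [z, eval_finsetSum] using this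
    have hpow : (W.eval x) ^ Q * (f.eval x) ^ ((d - 1) * E) = 0 := by
      rw [← hz, hWf, eval_finsetSum]
      subst hQp
      rw [sum_pow_char_pow, Finset.sum_mul]
      refine Finset.sum_congr rfl fun t _ => ?_
      simp only [eval_mul, eval_C, eval_pow, eval_X, mul_pow]
      rw [← pow_mul (b t)]
      have hbb : (b t) ^ (p ^ h * p ^ h) = b t := by
        rw [← sq, ← hcard]; exact FiniteField.pow_card _
      rw [hbb, ← hu]
      have hx1 : (x ^ ((t.2.2 : ℕ) + p ^ h * (t.1 : ℕ))) ^ p ^ h = x ^ (p ^ h * (t.2.2 : ℕ) + (t.1 : ℕ)) := by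
        rw [← pow_mul, add_mul, pow_add, pow_add, mul_comm (t.2.2 : ℕ)]
        congr 1
        rw [mul_right_comm, pow_mul, hxx]
      rw [hx1]
      have hj := t.2.1.isLt
      obtain ⟨m, hm⟩ : ∃ m, d - 1 = (t.2.1 : ℕ) + m := ⟨d - 1 - t.2.1, by omega⟩
      rw [hm, Nat.add_sub_cancel_left]
      ring
    rcases mul_eq_zero.1 hpow with h1 | h1
    · exact pow_eq_zero_iff (by omega) |>.1 h1
    · exact absurd h1 (pow_ne_zero _ hx)
  calc _ ≤ W.roots.toFinset.card := by
        apply Finset.card_le_card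
        intro x hx
        simp only [Finset.mem_filter, Finset.mem_univ, true_and] at hx
        simp only [Multiset.mem_toFinset, mem_roots hW0, IsRoot]
        exact hroot x hx.1 hx.2
    _ ≤ W.roots.card := Multiset.toFinset_card_le _
    _ ≤ W.natDegree := card_roots' W
    _ ≤ _ := hWdeg

lemma aux_stepanov (K : Type*) [Field K] [Fintype K] [DecidableEq K] (p h Q d E D : ℕ)
    [Fact p.Prime] [CharP K p] (hQp : Q = p ^ h)
    (hcard : Fintype.card K = Q ^ 2) (hE : d * E + 1 = Q) (hd : 2 ≤ d) (hQ : 2 * D + 3 < Q)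
    (f : K[X]) (hsep : f.Separable) (α : K) (hα : f.eval α = 0) (hfD : f.natDegree ≤ D) (u : K) :
    (Finset.univ.filter (fun x : K => f.eval x ≠ 0 ∧ (f.eval x) ^ (E * (Q + 1)) = u)).card
      ≤ Q * (E + 2 * D + 2) := by
  classical
  let g : K[X] := f.comp (X + C α)
  have hg : X ∣ g := by
    rw [X_dvd_iff, coeff_zero_eq_eval_zero]; simp [g, hα]
  obtain ⟨g1, hg1⟩ := hg
  have hg10 : g1.eval 0 ≠ 0 := by
    intro h0
    have h1 : g.derivative.eval 0 = 0 := by rw [hg1]; simp [h0]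
    have h2 : f.derivative.eval α = 0 := by
      simpa [g, derivative_comp] using h1
    obtain ⟨a, b, hab⟩ := hsep
    have := congrArg (eval α) hab
    simp [hα, h2] at this
  have hgd : g.natDegree ≤ D := by
    simp only [g]; rw [natDegree_comp]; simpa using hfD
  have := aux_stepanov0 K p h Q d E D hQp hcard hE hd hQ g g1 hg1 hg10 hgd u
  refine le_trans (le_of_eq ?_) this
  refine Finset.card_bij (fun x _ => x - α) ?_ ?_ ?_
  · intro x hx
    simpa [g] using hx
  · intro x _ y _ h; simpa using h
  · intro y hy
    exact ⟨y + α, by simpa [g] using hy, by simp⟩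

lemma aux_weil_ext (p : ℕ) [Fact p.Prime] (hp : 3 ≤ p) (f : (ZMod p)[X]) (hsep : f.Separable)
    (χ : MulChar (ZMod p) ℂ) (hχ : χ ≠ 1) (K : Type*) [Field K] [Fintype K] [DecidableEq K]
    [Algebra (ZMod p) K] (h : ℕ) (hK : Module.finrank (ZMod p) K = 2 * h)
    (hh : 2 * f.natDegree + 3 < p ^ h) (α : K) (hα : aeval α f = 0) :
    ‖∑ x : K, χ (Algebra.norm (ZMod p) (aeval x f))‖
      ≤ (((p : ℝ) - 1) * (2 * f.natDegree + 2) + f.natDegree) * (p : ℝ) ^ h := by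
  classical
  have : CharP K p := charP_of_injective_algebraMap (algebraMap (ZMod p) K).injective p
  set D := f.natDegree with hD
  set Q := p ^ h with hQ
  have hcard : Fintype.card K = Q ^ 2 := by
    rw [← FiniteField.pow_finrank_eq_card p K, hK, hQ, ← pow_mul, mul_comm]
  set d := p - 1 with hd
  obtain ⟨E, hE⟩ : d ∣ Q - 1 := by
    have := Nat.sub_dvd_pow_sub_pow p 1 h
    simpa using this
  have hQ1 : 1 ≤ Q := by omega
  have hE' : d * E + 1 = Q := by omega
  have hnorm : ∀ y : K, algebraMap (ZMod p) K (Algebra.norm (ZMod p) y) = y ^ (E * (Q + 1)) := by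
    intro y
    rw [FiniteField.algebraMap_norm_eq_pow, Nat.card_zmod, Nat.card_eq_fintype_card, hcard]
    congr 1
    have : Q ^ 2 - 1 = (p - 1) * (E * (Q + 1)) := by
      rw [← mul_assoc, ← hd]
      have h1 : d * E = Q - 1 := by omega
      rw [h1]
      obtain ⟨R, hR⟩ : ∃ R, Q = R + 1 := ⟨Q - 1, by omega⟩
      rw [hR]
      simp only [Nat.add_sub_cancel]
      have : (R + 1) ^ 2 = R * (R + 1 + 1) + 1 := by ring
      omega
    rw [this, Nat.mul_div_cancel_left _ (by omega)]
  let N : ZMod p → ℕ := fun u =>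
    (Finset.univ.filter (fun x : K => Algebra.norm (ZMod p) (aeval x f) = u)).card
  set T := Q * (E + 2 * D + 2) with hT
  have hNT : ∀ u, u ≠ 0 → N u ≤ T := by
    intro u hu
    have hm : (f.map (algebraMap (ZMod p) K)).natDegree ≤ D := natDegree_map_le
    have := aux_stepanov K p h Q d E D hQ hcard hE' (by omega) hh (f.map (algebraMap (ZMod p) K))
      (hsep.map) α (by rw [eval_map_algebraMap]; exact hα) hm (algebraMap (ZMod p) K u)
    refine le_trans (Finset.card_le_card ?_) this
    intro x hx
    simp only [Finset.mem_filter, Finset.mem_univ, true_and, eval_map_algebraMap] at hx ⊢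
    constructor
    · intro h0
      rw [h0, Algebra.norm_zero] at hx
      exact hu hx.symm
    · rw [← hnorm, hx]
  have hfib : ∑ x : K, χ (Algebra.norm (ZMod p) (aeval x f)) = ∑ u : ZMod p, χ u * (N u : ℂ) := by
    rw [← Finset.sum_fiberwise (s := Finset.univ)
      (g := fun x : K => Algebra.norm (ZMod p) (aeval x f))]
    refine Finset.sum_congr rfl fun u _ => ?_
    rw [Finset.sum_congr rfl (g := fun _ => χ u)]
    · rw [Finset.sum_const, nsmul_eq_mul, mul_comm]
    · intro x hx
      simp only [Finset.mem_filter] at hx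
      rw [hx.2]
  have hsum0 : ∑ u : ZMod p, χ u = 0 := MulChar.sum_eq_zero_of_ne_one hχ
  have hfib2 : ∑ x : K, χ (Algebra.norm (ZMod p) (aeval x f))
      = ∑ u ∈ (Finset.univ.erase (0 : ZMod p)), χ u * ((N u : ℂ) - T) := by
    rw [hfib, Finset.sum_erase]
    · simp only [mul_sub, Finset.sum_sub_distrib]
      rw [← Finset.sum_mul, hsum0]; simp
    · simp [MulChar.map_zero]
  have hNsum : (Fintype.card K : ℕ) ≤ D + ∑ u ∈ (Finset.univ.erase (0 : ZMod p)), N u := by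
    have h1 : ∑ u : ZMod p, N u = Fintype.card K := by
      rw [← Finset.card_univ, Finset.card_eq_sum_card_fiberwise (s := (Finset.univ : Finset K))
        (t := Finset.univ) (f := fun x : K => Algebra.norm (ZMod p) (aeval x f)) (by simp)]
    rw [← h1, ← Finset.add_sum_erase _ _ (Finset.mem_univ (0 : ZMod p))]
    have h2 : N 0 ≤ D := by
      have hf0 : f ≠ 0 := hsep.ne_zero
      calc N 0 ≤ (f.aroots K).toFinset.card := by
            apply Finset.card_le_card
            intro x hx
            simp only [Finset.mem_filter, Finset.mem_univ, true_and] at hx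
            rw [Algebra.norm_eq_zero_iff] at hx
            rw [Multiset.mem_toFinset, mem_aroots]
            exact ⟨hf0, hx⟩
        _ ≤ (f.aroots K).card := Multiset.toFinset_card_le _
        _ ≤ D := (card_roots' _).trans natDegree_map_le
    omega
  rw [hfib2]
  have hb : ‖∑ u ∈ (Finset.univ.erase (0 : ZMod p)), χ u * ((N u : ℂ) - T)‖
      ≤ ∑ u ∈ (Finset.univ.erase (0 : ZMod p)), ((T : ℝ) - N u) := by
    refine norm_sum_le_of_le _ fun u hu => ?_
    have hu0 : u ≠ 0 := by simpa using hu
    rw [norm_mul]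
    have h1 : ‖χ u‖ ≤ 1 := DirichletCharacter.norm_le_one χ u
    have h2 : ‖(N u : ℂ) - T‖ = (T : ℝ) - N u := by
      rw [norm_sub_rev]
      have : ((T : ℂ) - (N u : ℂ)) = (((T : ℝ) - (N u : ℝ) : ℝ) : ℂ) := by push_cast; rfl
      rw [this, Complex.norm_real, Real.norm_of_nonneg]
      rw [sub_nonneg]; exact_mod_cast hNT u hu0
    rw [h2]
    have h3 : (0:ℝ) ≤ (T : ℝ) - N u := by rw [sub_nonneg]; exact_mod_cast hNT u hu0
    nlinarith
  refine hb.trans ?_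
  rw [Finset.sum_sub_distrib, Finset.sum_const, Finset.card_erase_of_mem (Finset.mem_univ _),
    Finset.card_univ, ZMod.card, nsmul_eq_mul, ← hd]
  have h5 : ((Q : ℝ)) ^ 2 ≤ D + ∑ u ∈ (Finset.univ.erase (0 : ZMod p)), (N u : ℝ) := by
    rw [hcard] at hNsum; exact_mod_cast hNsum
  have h6 : (d : ℝ) * E + 1 = Q := by exact_mod_cast hE'
  have h7 : (d : ℝ) = (p : ℝ) - 1 := by
    rw [hd, Nat.cast_sub (by omega)]; simp
  have h8 : ((p : ℝ)) ^ h = Q := by rw [hQ]; push_cast; rfl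
  rw [h8, ← h7, hT]
  push_cast
  have h9 : (1:ℝ) ≤ Q := by exact_mod_cast hQ1
  have h10 : (0:ℝ) ≤ D := by positivity
  nlinarith

/-- norm of a polynomial in a generator as a resultant -/
lemma aux_norm_gen_resultant {F L : Type} [Field F] [Finite F] [Field L] [Algebra F L]
    (pb : PowerBasis F L) (f : F[X]) :
    Algebra.norm F (aeval pb.gen f) = resultant (minpoly F pb.gen) f := by
  classical
  have : FiniteDimensional F L := pb.finite
  have : Algebra.IsSeparable F L := inferInstance
  let E := AlgebraicClosure F
  apply (algebraMap F E).injective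
  rw [Algebra.norm_eq_prod_embeddings F E]
  have h1 := resultant_map_map (minpoly F pb.gen) f (minpoly F pb.gen).natDegree f.natDegree
    (algebraMap F E)
  rw [← h1]
  have hm := minpoly.monic pb.isIntegral_gen
  have hm' : ((minpoly F pb.gen).map (algebraMap F E)).natDegree = (minpoly F pb.gen).natDegree :=
    natDegree_map _
  rw [← hm']
  rw [resultant_eq_prod_eval]
  rotate_left
  · exact natDegree_map_le
  · exact IsAlgClosed.splits _
  rw [(hm.map _).leadingCoeff, one_pow, one_mul]
  have : ∏ σ : L →ₐ[F] E, σ (aeval pb.gen f) =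
     ∏ y : { y : E // y ∈ (minpoly F pb.gen).aroots E }, (f.map (algebraMap F E)).eval (y : E) := by
    apply Fintype.prod_equiv pb.liftEquiv'
    intro σ
    rw [PowerBasis.liftEquiv'_apply_coe, ← aeval_algHom_apply, eval_map_algebraMap]
  rw [this]
  rw [Finset.prod_mem_multiset _ _ (fun y => (f.map (algebraMap F E)).eval y) (fun _ => rfl)]
  rw [Finset.prod_eq_multiset_prod, Multiset.toFinset_val, Multiset.dedup_eq_self.mpr]
  · exact nodup_roots (Separable.map (Algebra.IsSeparable.isSeparable F pb.gen))

lemma aux_norm_resultant {F K : Type} [Field F] [Finite F] [Field K] [Algebra F K]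
    [FiniteDimensional F K] (x : K) (f : F[X]) :
    ∃ j, (minpoly F x).natDegree * j = Module.finrank F K ∧ 
    Algebra.norm F (aeval x f) = (resultant (minpoly F x) f) ^ j := by
  have hx : IsIntegral F x := Algebra.IsIntegral.isIntegral x
  refine ⟨Module.finrank (IntermediateField.adjoin F {x}) K, ?_, ?_⟩
  · rw [← IntermediateField.adjoin.finrank hx]
    exact Module.finrank_mul_finrank _ _ _
  · have h2 := aux_norm_gen_resultant (IntermediateField.adjoin.powerBasis hx) f
    rw [IntermediateField.adjoin.powerBasis_gen hx, IntermediateField.minpoly_gen] at h2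
    rw [← h2, ← Algebra.norm_norm (R := F) (S := IntermediateField.adjoin F {x}), ← map_pow]
    congr 1
    rw [← Algebra.norm_algebraMap]
    congr 1
    rw [← aeval_algebraMap_apply]
    simp

lemma aux_card_minpoly {F K : Type} [Field F] [Field K] [Fintype K] [Algebra F K]
    [DecidableEq F[X]] (P : F[X]) (hP : Irreducible P) (hm : P.Monic) :
    (Finset.univ.filter (fun x : K => minpoly F x = P)).card =
      if P.natDegree ∣ Module.finrank F K then P.natDegree else 0 := by
  classical
  have : FiniteDimensional F K := inferInstance
  have hIntegral : ∀ x : K, IsIntegral F x := fun x => Algebra.IsIntegral.isIntegral x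
  split_ifs with h
  · have := Fact.mk hP
    have h1 : Module.finrank F (AdjoinRoot P) = P.natDegree := by
      rw [(AdjoinRoot.powerBasis hP.ne_zero).finrank]; simp
    have h2 := FiniteField.natCard_algHom_of_finrank_dvd (F := F) (K := AdjoinRoot P) (L := K)
      (by rw [h1]; exact h)
    rw [h1, Nat.card_congr (AdjoinRoot.equiv K F P hP.ne_zero)] at h2
    rw [← h2, ← Fintype.card_subtype, ← Nat.card_eq_fintype_card]
    apply Nat.card_congr
    apply Equiv.subtypeEquivRight
    intro x
    rw [mem_aroots]
    constructor
    · rintro rfl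
      exact ⟨hP.ne_zero, minpoly.aeval F x⟩
    · rintro ⟨_, hx⟩
      exact (minpoly.eq_of_irreducible_of_monic hP hx hm).symm
  · rw [Finset.card_eq_zero, Finset.filter_eq_empty_iff]
    intro x _ hx
    apply h
    rw [← hx, ← IntermediateField.adjoin.finrank (hIntegral x)]
    exact ⟨_, (Module.finrank_mul_finrank F (IntermediateField.adjoin F {x}) K).symm⟩

open UniqueFactorizationMonoid in
lemma aux_count_identity {F : Type} [Field F] (K : ℕ → Type) [∀ k, Field (K k)]
    [∀ k, Fintype (K k)] [∀ k, Algebra F (K k)] (hK : ∀ k, 1 ≤ k → Module.finrank F (K k) = k)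
    [DecidableEq F[X]] [DecidableRel ((· ∣ ·) : F[X] → F[X] → Prop)]
    (G : F[X]) (hG : G.Monic) :
    G.natDegree = ∑ k ∈ Finset.Icc 1 G.natDegree, (Finset.univ.filter (fun x : K k =>
      (minpoly F x) ^ (k / (minpoly F x).natDegree) ∣ G)).card := by
  classical
  set n := G.natDegree with hn
  have hG0 := hG.ne_zero
  -- degrees
  have hdeg : n = ∑ P ∈ (normalizedFactors G).toFinset, (normalizedFactors G).count P * P.natDegree := by
    have h1 := leadingCoeff_mul_prod_normalizedFactors G
    rw [hG.leadingCoeff, C_1, one_mul] at h1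
    rw [hn]
    conv_lhs => rw [← h1]
    rw [natDegree_multiset_prod_of_monic]
    · rw [Finset.sum_multiset_map_count]
      simp
    · intro P hP
      exact ((Polynomial.mem_normalizedFactors_iff hG0).1 hP).2.1
  have hmem : ∀ P ∈ (normalizedFactors G).toFinset, Irreducible P ∧ P.Monic ∧ P ∣ G := by
    intro P hP
    exact (Polynomial.mem_normalizedFactors_iff hG0).1 (Multiset.mem_toFinset.1 hP)
  have hpow : ∀ P ∈ (normalizedFactors G).toFinset, ∀ j : ℕ, P ^ j ∣ G ↔ j ≤ (normalizedFactors G).count P := by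
    intro P hP j
    obtain ⟨h1, h2, h3⟩ := hmem P hP
    rw [pow_dvd_iff_le_emultiplicity, emultiplicity_eq_count_normalizedFactors h1 hG0, h2.normalize_eq_self]
    norm_cast
  have hcard : ∀ k ∈ Finset.Icc 1 n, (Finset.univ.filter (fun x : K k =>
      (minpoly F x) ^ (k / (minpoly F x).natDegree) ∣ G)).card =
      ∑ P ∈ (normalizedFactors G).toFinset, if P.natDegree ∣ k ∧ k / P.natDegree ≤ (normalizedFactors G).count P then P.natDegree else 0 := by
    intro k hk
    have hk1 := (Finset.mem_Icc.1 hk).1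
    have hfr := hK k hk1
    have hIntegral : ∀ x : K k, IsIntegral F x := fun x => Algebra.IsIntegral.isIntegral x
    rw [Finset.card_eq_sum_card_fiberwise (f := fun x => minpoly F x) (t := (normalizedFactors G).toFinset)]
    · apply Finset.sum_congr rfl
      intro P hP
      obtain ⟨h1, h2, h3⟩ := hmem P hP
      have h4 := aux_card_minpoly (K := K k) P h1 h2
      rw [hfr] at h4
      rw [Finset.filter_filter]
      by_cases hc : k / P.natDegree ≤ (normalizedFactors G).count P
      · simp only [hc, and_true]
        rw [← h4]
        congr 1
        apply Finset.filter_congr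
        intro x _
        constructor
        · exact fun h => h.2
        · intro h
          refine ⟨?_, h⟩
          rw [h]
          exact (hpow P hP _).2 hc
      · simp only [hc, and_false, if_false]
        rw [Finset.card_eq_zero, Finset.filter_eq_empty_iff]
        rintro x _ ⟨ha, hb⟩
        rw [hb] at ha
        exact hc ((hpow P hP _).1 ha)
    · intro x hx
      simp only [Finset.coe_filter, Finset.mem_univ, true_and, Set.mem_ofPred_eq] at hx
      have hd : (minpoly F x).natDegree ∣ k := by
        rw [← IntermediateField.adjoin.finrank (hIntegral x)]
        refine Dvd.dvd.trans ?_ hfr.dvd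
        exact ⟨_, (Module.finrank_mul_finrank F (IntermediateField.adjoin F {x}) (K k)).symm⟩
      have hpos : k / (minpoly F x).natDegree ≠ 0 := by
        have := Nat.div_pos (Nat.le_of_dvd hk1 hd) (minpoly.natDegree_pos (hIntegral x))
        omega
      rw [Finset.mem_coe, Multiset.mem_toFinset, Polynomial.mem_normalizedFactors_iff hG0]
      exact ⟨minpoly.irreducible (hIntegral x), minpoly.monic (hIntegral x), (dvd_pow_self _ hpos).trans hx⟩
  rw [Finset.sum_congr rfl hcard, Finset.sum_comm]
  refine hdeg.trans ?_
  apply Finset.sum_congr rfl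
  intro P hP
  obtain ⟨h1, h2, h3⟩ := hmem P hP
  have hdpos : 0 < P.natDegree := h1.natDegree_pos
  have hle : (normalizedFactors G).count P * P.natDegree ≤ n := by
    rw [hdeg]
    exact Finset.single_le_sum (f := fun P => (normalizedFactors G).count P * P.natDegree) (fun _ _ => Nat.zero_le _) hP
  rw [← Finset.sum_filter, Finset.sum_const, smul_eq_mul]
  congr 1
  have : (Finset.Icc 1 n).filter (fun k => P.natDegree ∣ k ∧ k / P.natDegree ≤ (normalizedFactors G).count P)
     = (Finset.Icc 1 ((normalizedFactors G).count P)).image (fun j => P.natDegree * j) := by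
    ext k
    simp only [Finset.mem_filter, Finset.mem_Icc, Finset.mem_image]
    constructor
    · rintro ⟨⟨ha, hb⟩, ⟨j, rfl⟩, hc⟩
      rw [Nat.mul_div_cancel_left _ hdpos] at hc
      refine ⟨j, ⟨?_, hc⟩, rfl⟩
      rcases Nat.eq_zero_or_pos j with h | h
      · simp [h] at ha
      · exact h
    · rintro ⟨j, ⟨ha, hb⟩, rfl⟩
      refine ⟨⟨Nat.mul_pos hdpos ha, ?_⟩, ⟨j, rfl⟩, ?_⟩
      · refine le_trans ?_ hle
        rw [mul_comm]
        exact Nat.mul_le_mul_right _ hb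
      · rw [Nat.mul_div_cancel_left _ hdpos]; exact hb
  rw [this, Finset.card_image_of_injective _ (fun a b hab => Nat.eq_of_mul_eq_mul_left hdpos hab)]
  simp

lemma aux_monic_finite (F : Type) [Field F] [Finite F] (n : ℕ) :
    {G : F[X] | G.Monic ∧ G.natDegree = n}.Finite := by
  have : Finite (degreeLT F n) := Finite.of_equiv _ (degreeLTEquiv F n).symm.toEquiv
  refine Set.Finite.subset (s := Set.image (fun r : degreeLT F n => X ^ n + (r : F[X])) Set.univ)
    (Set.finite_univ.image _) ?_
  rintro G ⟨hG, rfl⟩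
  refine ⟨⟨G - X ^ G.natDegree, ?_⟩, trivial, by simp⟩
  rw [mem_degreeLT]
  rw [← degree_eq_natDegree hG.ne_zero]
  apply degree_sub_lt_left
  · rw [degree_X_pow, degree_eq_natDegree hG.ne_zero]
  · exact hG.ne_zero
  · rw [hG.leadingCoeff, leadingCoeff_X_pow]

noncomputable def auxMonic (F : Type) [Field F] [Finite F] (n : ℕ) : Finset F[X] :=
  (aux_monic_finite F n).toFinset

lemma aux_mem_monic {F : Type} [Field F] [Finite F] {n : ℕ} {G : F[X]} :
    G ∈ auxMonic F n ↔ G.Monic ∧ G.natDegree = n := by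
  simp [auxMonic]

lemma aux_recurrence {F : Type} [Field F] [Finite F] (K : ℕ → Type) [∀ k, Field (K k)]
    [∀ k, Fintype (K k)] [∀ k, Algebra F (K k)] (hK : ∀ k, 1 ≤ k → Module.finrank F (K k) = k)
    (lam : F[X] → ℂ) (hlam : ∀ G H : F[X], G.Monic → H.Monic → lam (G * H) = lam G * lam H)
    (n : ℕ) :
    (n : ℂ) * ∑ G ∈ auxMonic F n, lam G = ∑ k ∈ Finset.Icc 1 n,
      (∑ x : K k, lam ((minpoly F x) ^ (k / (minpoly F x).natDegree))) *
        ∑ G ∈ auxMonic F (n - k), lam G := by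
  classical
  have hIntegral : ∀ k, 1 ≤ k → ∀ x : K k, IsIntegral F x := fun k hk x => Algebra.IsIntegral.isIntegral x
  calc (n : ℂ) * ∑ G ∈ auxMonic F n, lam G
      = ∑ G ∈ auxMonic F n, ∑ k ∈ Finset.Icc 1 n, ∑ x : K k,
          if (minpoly F x) ^ (k / (minpoly F x).natDegree) ∣ G then lam G else 0 := by
        rw [Finset.mul_sum]
        apply Finset.sum_congr rfl
        intro G hG
        obtain ⟨hm, hd⟩ := aux_mem_monic.1 hG
        have h1 := aux_count_identity K hK G hm
        rw [hd] at h1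
        conv_lhs => rw [h1]
        rw [Nat.cast_sum, Finset.sum_mul]
        apply Finset.sum_congr rfl
        intro k _
        rw [← Finset.sum_filter, Finset.sum_const, nsmul_eq_mul]
    _ = ∑ k ∈ Finset.Icc 1 n, ∑ x : K k, ∑ G ∈ auxMonic F n,
          if (minpoly F x) ^ (k / (minpoly F x).natDegree) ∣ G then lam G else 0 := by
        rw [Finset.sum_comm]
        apply Finset.sum_congr rfl
        intro k _
        rw [Finset.sum_comm]
    _ = _ := by
        apply Finset.sum_congr rfl
        intro k hk
        obtain ⟨hk1, hkn⟩ := Finset.mem_Icc.1 hk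
        rw [Finset.sum_mul]
        apply Finset.sum_congr rfl
        intro x _
        have hd : (minpoly F x).natDegree ∣ k := by
          rw [← IntermediateField.adjoin.finrank (hIntegral k hk1 x)]
          refine Dvd.dvd.trans ?_ (hK k hk1).dvd
          exact ⟨_, (Module.finrank_mul_finrank F (IntermediateField.adjoin F {x}) (K k)).symm⟩
        set H := (minpoly F x) ^ (k / (minpoly F x).natDegree) with hH
        have hHm : H.Monic := (minpoly.monic (hIntegral k hk1 x)).pow _
        have hHd : H.natDegree = k := by
          rw [hH, natDegree_pow]
          exact Nat.div_mul_cancel hd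
        rw [← Finset.sum_filter, Finset.mul_sum]
        symm
        refine Finset.sum_bij (fun G _ => H * G) ?_ ?_ ?_ ?_
        · intro G hG
          obtain ⟨hm, hd⟩ := aux_mem_monic.1 hG
          rw [Finset.mem_filter, aux_mem_monic]
          refine ⟨⟨hHm.mul hm, ?_⟩, dvd_mul_right _ _⟩
          rw [hHm.natDegree_mul hm, hHd, hd]; omega
        · intro a _ b _ hab
          exact mul_left_cancel₀ hHm.ne_zero hab
        · intro G hG
          rw [Finset.mem_filter, aux_mem_monic] at hG
          obtain ⟨⟨hm, hd⟩, G', rfl⟩ := hG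
          have hm' := hHm.of_mul_monic_left hm
          refine ⟨G', ?_, rfl⟩
          rw [aux_mem_monic]
          refine ⟨hm', ?_⟩
          rw [hHm.natDegree_mul hm', hHd] at hd
          omega
        · intro G hG
          rw [hlam _ _ hHm (aux_mem_monic.1 hG).1]

lemma aux_res_congr {F : Type} [Field F] (g a b : F[X]) (m : ℕ) (hg : g ≠ 0)
    (ha : a.natDegree ≤ m) (hb : b.natDegree ≤ m) (hgm : g.natDegree ≤ m) (hd : g ∣ a - b) :
    resultant a g m g.natDegree = resultant b g m g.natDegree := by
  obtain ⟨p, hp⟩ := hd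
  have : a = b + g * p := by rw [← hp]; ring
  rw [this]
  apply resultant_add_mul_left _ _ _ _ _ _ le_rfl
  by_cases h0 : p = 0
  · simpa [h0] using hgm
  · have h1 := natDegree_mul hg h0
    have h2 := natDegree_sub_le_of_le ha hb
    rw [hp, h1] at h2
    simp at h2
    omega

lemma aux_exists_twist {F : Type} [Field F] [Finite F] (f : F[X]) (hsep : f.Separable)
    (hD : 1 ≤ f.natDegree) (χ : MulChar F ℂ) (hχ : χ ≠ 1) :
    ∃ U U' : F[X], U.Monic ∧ U'.Monic ∧ U.natDegree = f.natDegree ∧ U'.natDegree = f.natDegree ∧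
      IsCoprime U f ∧ IsCoprime U' f ∧ χ (resultant U f) ≠ χ (resultant U' f) := by
  classical
  have hf0 : f ≠ 0 := by rintro rfl; simp at hD
  set D := f.natDegree with hDdef
  obtain ⟨g, hgm, hgi, h, hfgh⟩ := exists_monic_irreducible_factor f
    (not_isUnit_of_natDegree_pos f hD)
  have hh0 : h ≠ 0 := by rintro rfl; simp [hf0] at hfgh
  have hcop : IsCoprime g h := by rw [hfgh] at hsep; exact hsep.isCoprime
  obtain ⟨a, ha⟩ := MulChar.ne_one_iff.1 hχ
  have := Fact.mk hgi
  have : Module.Finite F (AdjoinRoot g) := hgm.finite_adjoinRoot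
  have : Finite (AdjoinRoot g) := Module.finite_of_finite F
  obtain ⟨θ, hθ⟩ := FiniteField.norm_surjective F (AdjoinRoot g) (a : F)
  obtain ⟨t, rfl⟩ := AdjoinRoot.mk_surjective θ
  obtain ⟨u1, u2, hu⟩ := hcop
  have hdeg : D = g.natDegree + h.natDegree := by
    rw [hDdef, hfgh, natDegree_mul hgm.ne_zero hh0]
  set u := t %ₘ g with hudef
  have hudeg : u.natDegree ≤ D := by
    have := natDegree_modByMonic_lt t hgm (by intro h; rw [h] at hgi; exact not_irreducible_one hgi)
    rw [← hudef] at this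
    omega
  have hgu : g ∣ t - u := by
    refine ⟨t /ₘ g, ?_⟩
    have := modByMonic_add_div t g
    rw [hudef]; linear_combination -this
  set f1 := C f.leadingCoeff⁻¹ * f with hf1
  have hlc : f.leadingCoeff ≠ 0 := leadingCoeff_ne_zero.2 hf0
  have hf1m : f1.Monic := by
    rw [hf1, mul_comm]; exact monic_mul_leadingCoeff_inv hf0
  have hf1d : f1.natDegree = D := by
    rw [hf1, natDegree_C_mul (inv_ne_zero hlc)]
  have hf1dvd : f ∣ f1 := dvd_mul_left _ _
  have hf1dvd' : f1 ∣ f := ⟨C f.leadingCoeff, by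
    rw [hf1, mul_comm, ← mul_assoc, ← C_mul, mul_inv_cancel₀ hlc, C_1, one_mul]⟩
  set U0 := u * (u2 * h) + u1 * g with hU0
  set U := f1 + U0 %ₘ f1 with hU
  set U' := f1 + 1 with hU'
  have hf1d0 : f1.degree = D := by rw [degree_eq_natDegree hf1m.ne_zero, hf1d]
  have hlt1 : (U0 %ₘ f1).degree < f1.degree := degree_modByMonic_lt _ hf1m
  have hlt2 : (1 : F[X]).degree < f1.degree := by
    rw [hf1d0, degree_one]; exact_mod_cast hD
  have hUm : U.Monic := hf1m.add_of_left hlt1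
  have hU'm : U'.Monic := hf1m.add_of_left hlt2
  have hUd : U.natDegree = D := by
    rw [hU, natDegree_add_eq_left_of_degree_lt hlt1, hf1d]
  have hU'd : U'.natDegree = D := by
    rw [hU', natDegree_add_eq_left_of_degree_lt hlt2, hf1d]
  have hfU : f ∣ U - U0 := by
    have : U0 %ₘ f1 - U0 = f1 * (-(U0 /ₘ f1)) := by
      have := modByMonic_add_div U0 f1
      linear_combination this
    have h2 : U - U0 = f1 * (1 - (U0 /ₘ f1)) := by
      rw [hU]; linear_combination this
    rw [h2]
    exact hf1dvd.mul_right _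
  have hgf : g ∣ f := ⟨h, hfgh⟩
  have hhf : h ∣ f := ⟨g, by rw [hfgh, mul_comm]⟩
  have hgU : g ∣ U - u := by
    have : U - u = (U - U0) + g * (u1 - u * u1) := by
      rw [hU0]; linear_combination u * hu
    rw [this]
    exact dvd_add (hgf.trans hfU) (dvd_mul_right _ _)
  have hhU : h ∣ U - 1 := by
    have : U - 1 = (U - U0) + h * (u * u2 - u2) := by
      rw [hU0]; linear_combination  hu
    rw [this]
    exact dvd_add (hhf.trans hfU) (dvd_mul_right _ _)
  have hgU' : g ∣ U' - 1 := by rw [hU', add_sub_cancel_right]; exact hgf.trans hf1dvd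
  have hhU' : h ∣ U' - 1 := by rw [hU', add_sub_cancel_right]; exact hhf.trans hf1dvd
  have key : ∀ W : F[X], W.natDegree = D → h ∣ W - 1 → resultant W f = resultant W g D g.natDegree * resultant 1 h D h.natDegree := by
    intro W hWd hW
    rw [← aux_res_congr h W 1 D hh0 hWd.le (by simp) (by omega) hW]
    rw [← resultant_mul_right W g h D hWd.le]
    rw [hWd, ← hdeg, ← hfgh, hDdef]
  have hnorm : resultant u g D g.natDegree = (-1) ^ (D * g.natDegree) * (a : F) := by
    rw [resultant_comm]
    congr 1
    have h1 := aux_norm_gen_resultant (AdjoinRoot.powerBasis hgm.ne_zero) u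
    rw [AdjoinRoot.minpoly_powerBasis_gen_of_monic hgm, AdjoinRoot.powerBasis_gen, AdjoinRoot.aeval_eq] at h1
    have h2 : AdjoinRoot.mk g u = AdjoinRoot.mk g t := by
      rw [eq_comm, AdjoinRoot.mk_eq_mk]; exact hgu
    rw [h2, hθ] at h1
    obtain ⟨k, hk⟩ := Nat.exists_eq_add_of_le hudeg
    rw [hk, resultant_add_right_deg _ _ _ _ _ le_rfl, hgm.coeff_natDegree, one_pow, one_mul, h1]
  have hU_res : resultant U f = (-1) ^ (D * g.natDegree) * (a : F) * resultant 1 h D h.natDegree := by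
    rw [key U hUd hhU, aux_res_congr g U u D hgm.ne_zero hUd.le hudeg (by omega) hgU, hnorm]
  have hU'_res : resultant U' f = (-1) ^ (D * g.natDegree) * resultant 1 h D h.natDegree := by
    rw [key U' hU'd hhU', aux_res_congr g U' 1 D hgm.ne_zero hU'd.le (by simp) (by omega) hgU']
    simp [hgm.leadingCoeff]
  have hU'cop : IsCoprime U' f := by
    refine ⟨1, - C f.leadingCoeff⁻¹, ?_⟩
    rw [hU', hf1]; ring
  have hne' : resultant U' f ≠ 0 := resultant_ne_zero _ _ hU'cop
  have hUa : resultant U f = a * resultant U' f := by rw [hU_res, hU'_res]; ring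
  have hne : resultant U f ≠ 0 := by rw [hUa]; exact mul_ne_zero a.ne_zero hne'
  refine ⟨U, U', hUm, hU'm, hUd, hU'd, ?_, hU'cop, ?_⟩
  · by_contra hc
    exact hne (resultant_eq_zero_iff.2 ⟨Or.inr hf0, hc⟩)
  · rw [hUa, map_mul]
    intro hc
    apply ha
    have h3 : χ (resultant U' f) ≠ 0 := by
      have := (IsUnit.mk0 _ hne').map χ
      exact this.ne_zero
    exact mul_right_cancel₀ h3 (by rw [hc, one_mul])

lemma aux_vanish_monic {F : Type} [Field F] [Finite F] (f : F[X]) (hsep : f.Separable)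
    (hD : 1 ≤ f.natDegree) (χ : MulChar F ℂ) (hχ : χ ≠ 1) (N : ℕ) (hN : f.natDegree ≤ N) :
    ∑ G ∈ auxMonic F N, χ (resultant G f) = 0 := by
  classical
  have hf0 : f ≠ 0 := by rintro rfl; simp at hD
  obtain ⟨U, U', hUm, hU'm, hUd, hU'd, hUc, hU'c, hne⟩ := aux_exists_twist f hsep hD χ hχ
  set D := f.natDegree with hDdef
  set f1 := C f.leadingCoeff⁻¹ * f with hf1
  have hlc : f.leadingCoeff ≠ 0 := leadingCoeff_ne_zero.2 hf0
  have hf1m : f1.Monic := by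
    rw [hf1, mul_comm]; exact monic_mul_leadingCoeff_inv hf0
  have hf1d : f1.natDegree = D := by
    rw [hf1, natDegree_C_mul (inv_ne_zero hlc)]
  have hf1dvd : f ∣ f1 := dvd_mul_left _ _
  have hf1d0 : f1.degree = D := by rw [degree_eq_natDegree hf1m.ne_zero, hf1d]
  have hmod : ∀ a : F[X], f ∣ a - a %ₘ f1 := by
    intro a
    refine hf1dvd.trans ⟨a /ₘ f1, ?_⟩
    have := modByMonic_add_div a f1
    linear_combination -this
  have key : ∀ W : F[X], W.Monic → W.natDegree = D → IsCoprime W f →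
      χ (resultant W f) * ∑ G ∈ auxMonic F N, χ (resultant G f) =
      χ ((-1) ^ (D * D) * f.coeff D ^ D) * ∑ G ∈ auxMonic F N, χ (resultant G f) := by
    intro W hWm hWd hWc
    set T : F[X] → F[X] := fun G => G + ((W * (G %ₘ f1)) %ₘ f1 - G %ₘ f1) with hT
    have hlt : ∀ G, ((W * (G %ₘ f1)) %ₘ f1 - G %ₘ f1).degree < D := by
      intro G
      rw [← hf1d0]
      exact (degree_sub_le _ _).trans_lt (max_lt (degree_modByMonic_lt _ hf1m) (degree_modByMonic_lt _ hf1m))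
    have hTdvd : ∀ G, f ∣ W * G - T G := by
      intro G
      have h1 := hmod G
      have h2 := hmod (W * (G %ₘ f1))
      have : W * G - T G = W * (G - G %ₘ f1) + (W * (G %ₘ f1) - (W * (G %ₘ f1)) %ₘ f1)
        - (G - G %ₘ f1) := by simp only [hT]; ring
      rw [this]
      exact dvd_sub (dvd_add (h1.mul_left _) h2) h1
    have hTmem : ∀ G ∈ auxMonic F N, T G ∈ auxMonic F N := by
      intro G hG
      obtain ⟨hm, hd⟩ := aux_mem_monic.1 hG
      have hlt' : ((W * (G %ₘ f1)) %ₘ f1 - G %ₘ f1).degree < G.degree := by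
        refine (hlt G).trans_le ?_
        rw [degree_eq_natDegree hm.ne_zero, hd]
        exact_mod_cast hN
      rw [aux_mem_monic]
      refine ⟨hm.add_of_left hlt', ?_⟩
      simp only [hT]
      rw [natDegree_add_eq_left_of_degree_lt hlt', hd]
    have hTinj : Set.InjOn T (auxMonic F N) := by
      intro G _ H _ hGH
      have h1 : f ∣ W * (G - H) := by
        have := dvd_sub (hTdvd G) (hTdvd H)
        rw [hGH] at this
        convert this using 1; ring
      have h2 : f ∣ G - H := hWc.symm.dvd_of_dvd_mul_left h1
      have h3 : G %ₘ f1 = H %ₘ f1 := by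
        have h4 : f1 ∣ G - H := by
          refine Dvd.dvd.trans ⟨C f.leadingCoeff, ?_⟩ h2
          rw [hf1, mul_comm, ← mul_assoc, ← C_mul, mul_inv_cancel₀ hlc, C_1, one_mul]
        rw [← sub_eq_zero, ← sub_modByMonic]
        exact (modByMonic_eq_zero_iff_dvd hf1m).2 h4
      simp only [hT, h3] at hGH
      exact add_right_cancel hGH
    have hsum : ∑ G ∈ auxMonic F N, χ (resultant (T G) f) = ∑ G ∈ auxMonic F N, χ (resultant G f) := by
      have himg : (auxMonic F N).image T = auxMonic F N := by
        apply Finset.eq_of_subset_of_card_le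
        · intro x hx
          obtain ⟨G, hG, rfl⟩ := Finset.mem_image.1 hx
          exact hTmem G hG
        · rw [Finset.card_image_of_injOn hTinj]
      conv_rhs => rw [← himg]
      rw [Finset.sum_image hTinj]
    conv_rhs => rw [← hsum]
    rw [Finset.mul_sum, Finset.mul_sum]
    apply Finset.sum_congr rfl
    intro G hG
    obtain ⟨hm, hd⟩ := aux_mem_monic.1 hG
    obtain ⟨hm', hd'⟩ := aux_mem_monic.1 (hTmem G hG)
    rw [← map_mul, ← map_mul]
    congr 1
    rw [← resultant_mul_left W G f f.natDegree le_rfl]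
    rw [hWd, hd, aux_res_congr f (W * G) (T G) (D + N) hf0 _ (by omega) (by omega) (hTdvd G)]
    · rw [add_comm D N, resultant_add_left_deg _ _ _ _ _ hd'.le, hd']
    · rw [hWm.natDegree_mul hm, hWd, hd]
  by_contra h0
  exact hne (mul_right_cancel₀ h0 ((key U hUm hUd hUc).trans (key U' hU'm hU'd hU'c).symm))

lemma aux_weil (p : ℕ) [Fact p.Prime] (hp : 3 ≤ p) (f : (ZMod p)[X]) (hsep : f.Separable)
    (hD : 1 ≤ f.natDegree) (χ : MulChar (ZMod p) ℂ) (hχ : χ ≠ 1) :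
    ‖∑ x : ZMod p, χ (f.eval x)‖ ≤ ((f.natDegree : ℝ) - 1) * Real.sqrt p := by
  classical
  have hf0 : f ≠ 0 := by rintro rfl; simp at hD
  let K : ℕ → Type := fun k => GaloisField p k
  let : ∀ k, Field (K k) := fun k => inferInstanceAs (Field (GaloisField p k))
  let : ∀ k, Fintype (K k) := fun k => Fintype.ofFinite (GaloisField p k)
  let : ∀ k, Algebra (ZMod p) (K k) := fun k => inferInstanceAs (Algebra (ZMod p) (GaloisField p k))
  have hK : ∀ k, 1 ≤ k → Module.finrank (ZMod p) (K k) = k := fun k hk =>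
    GaloisField.finrank p (by omega)
  set D := f.natDegree with hDdef
  let lam : (ZMod p)[X] → ℂ := fun G => χ (resultant G f)
  have hlam : ∀ G H : (ZMod p)[X], G.Monic → H.Monic → lam (G * H) = lam G * lam H := by
    intro G H hG hH
    simp only [lam]
    rw [hG.natDegree_mul hH, resultant_mul_left _ _ _ _ le_rfl, map_mul]
  have hlam1 : lam 1 = 1 := by simp [lam]
  have hlampow : ∀ G : (ZMod p)[X], G.Monic → ∀ j, lam (G ^ j) = lam G ^ j := by
    intro G hG j
    induction j with
    | zero => simp [hlam1]
    | succ j ih => rw [pow_succ, hlam _ _ (hG.pow j) hG, ih, pow_succ]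
  let c : ℕ → ℂ := fun n => ∑ G ∈ auxMonic (ZMod p) n, lam G
  let S : ℕ → ℂ := fun k => ∑ x : K k, lam ((minpoly (ZMod p) x) ^ (k / (minpoly (ZMod p) x).natDegree))
  have hS : ∀ k, 1 ≤ k → S k = ∑ x : K k, χ (Algebra.norm (ZMod p) (aeval x f)) := by
    intro k hk
    apply Finset.sum_congr rfl
    intro x _
    have hIntegral : IsIntegral (ZMod p) x := Algebra.IsIntegral.isIntegral x
    obtain ⟨j, hj, hjn⟩ := aux_norm_resultant (F := ZMod p) x f
    rw [hjn, hlampow _ (minpoly.monic hIntegral), map_pow]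
    congr 1
    have h1 := hK k hk
    rw [h1] at hj
    exact Nat.div_eq_of_eq_mul_right (minpoly.natDegree_pos hIntegral) hj.symm
  have hc0 : c 0 = 1 := by
    have : auxMonic (ZMod p) 0 = {1} := by
      ext G
      rw [aux_mem_monic, Finset.mem_singleton]
      constructor
      · rintro ⟨h1, h2⟩
        exact (h1.natDegree_eq_zero).1 h2
      · rintro rfl
        exact ⟨monic_one, natDegree_one⟩
    simp only [c, this, Finset.sum_singleton, hlam1]
  have hcn : ∀ n, D ≤ n → c n = 0 := fun n hn => aux_vanish_monic f hsep hD χ hχ n hn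
  obtain ⟨s, hs, hsum⟩ := aux_newton D hD c S hc0 hcn (fun n => aux_recurrence K hK lam hlam n)
  -- choose N
  obtain ⟨g, hgm, hgi, hgf⟩ := exists_monic_irreducible_factor f
    (not_isUnit_of_natDegree_pos f hD)
  have hgd : 0 < g.natDegree := hgi.natDegree_pos
  set N := 2 * (g.natDegree * (2 * D + 4)) with hN
  have hN1 : 1 ≤ N := by
    have := Nat.mul_pos hgd (show 0 < 2 * D + 4 by omega)
    omega
  have hp0 : (0 : ℝ) < p := by exact_mod_cast (show 0 < p by omega)
  have hbound : ∀ z ∈ s, ‖z‖ ≤ Real.sqrt p := by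
    refine aux_norm_le_of_power_sums s (((p : ℝ) - 1) * (2 * D + 2) + D) (Real.sqrt p)
      (Real.sqrt_pos.2 hp0) N hN1 ?_
    intro n hn
    have hNn : 1 ≤ N * n := Nat.mul_pos hN1 hn
    have h1 := hsum (N * n) hNn
    rw [hS _ hNn] at h1
    have h2 : ‖(s.map (fun z => z ^ (N * n))).sum‖ =
        ‖∑ x : K (N * n), χ (Algebra.norm (ZMod p) (aeval x f))‖ := by
      rw [h1, norm_neg]
    rw [h2]
    set h := g.natDegree * (2 * D + 4) * n with hh
    have hfin : Module.finrank (ZMod p) (K (N * n)) = 2 * h := by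
      rw [hK _ hNn, hN, hh]; ring
    have hhl : 2 * D + 3 < p ^ h := by
      have h3 : 2 * D + 4 ≤ h := by
        rw [hh]
        calc 2 * D + 4 = 1 * (2 * D + 4) * 1 := by ring
          _ ≤ _ := by gcongr; exact hgd
      have h4 : h < p ^ h := Nat.lt_pow_self (by omega)
      omega
    have hroot : ∃ α : K (N * n), aeval α f = 0 := by
      have := Fact.mk hgi
      have : Module.Finite (ZMod p) (AdjoinRoot g) := hgm.finite_adjoinRoot
      have h5 : Module.finrank (ZMod p) (AdjoinRoot g) = g.natDegree := by
        rw [(AdjoinRoot.powerBasis hgi.ne_zero).finrank]; simp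
      obtain ⟨φ⟩ := FiniteField.nonempty_algHom_of_finrank_dvd (F := ZMod p) (K := AdjoinRoot g) (L := K (N * n))
        (by rw [h5, hfin, hh]; exact ⟨2 * ((2 * D + 4) * n), by ring⟩)
      refine ⟨φ (AdjoinRoot.root g), ?_⟩
      rw [aeval_algHom_apply, AdjoinRoot.aeval_eq, AdjoinRoot.mk_eq_zero.2 hgf, map_zero]
    obtain ⟨α, hα⟩ := hroot
    have h6 := aux_weil_ext p hp f hsep χ hχ (K (N * n)) h hfin hhl α hα
    have h7 : Real.sqrt p ^ (N * n) = (p : ℝ) ^ h := by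
      have : N * n = 2 * h := by rw [hN, hh]; ring
      rw [this, pow_mul, Real.sq_sqrt hp0.le]
    rw [h7]
    exact h6
  -- the case of the prime field
  have hS1 : S 1 = ∑ x : ZMod p, χ (f.eval x) := by
    rw [hS 1 le_rfl]
    symm
    have hbij : Function.Bijective (algebraMap (ZMod p) (K 1)) := by
      rw [Fintype.bijective_iff_injective_and_card]
      refine ⟨(algebraMap (ZMod p) (K 1)).injective, ?_⟩
      have := Module.card_eq_pow_finrank (K := ZMod p) (V := K 1)
      rw [this, hK 1 le_rfl, pow_one]
    apply Fintype.sum_bijective _ hbij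
    intro x
    rw [aeval_algebraMap_apply, Algebra.norm_algebraMap, hK 1 le_rfl, pow_one]
    simp
  rw [← hS1, hsum 1 le_rfl, norm_neg]
  calc ‖(s.map (fun z => z ^ 1)).sum‖ ≤ ((s.map (fun z => z ^ 1)).map norm).sum :=
        norm_multiset_sum_le _
    _ ≤ (s.card : ℝ) * Real.sqrt p := by
        rw [Multiset.map_map]
        have := Multiset.sum_le_card_nsmul (s.map (norm ∘ fun z : ℂ => z ^ 1)) (Real.sqrt p) (by
          intro x hx
          obtain ⟨z, hz, rfl⟩ := Multiset.mem_map.1 hx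
          simpa using hbound z hz)
        simpa using this
    _ ≤ _ := by
        gcongr
        have : (s.card : ℝ) ≤ ((D - 1 : ℕ) : ℝ) := by exact_mod_cast hs
        rw [Nat.cast_sub hD] at this
        simpa using this

lemma aux_sum_zmod_range (q : ℕ) [NeZero q] (g : ZMod q → ℂ) :
    ∑ x : ZMod q, g x = ∑ n ∈ Finset.range q, g (n : ZMod q) := by
  refine Finset.sum_bij' (fun x _ => x.val) (fun n _ => (n : ZMod q)) ?_ ?_ ?_ ?_ ?_
  · intro x _; exact Finset.mem_range.2 (ZMod.val_lt x)
  · intro n _; exact Finset.mem_univ _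
  · intro x _; exact ZMod.natCast_zmod_val x
  · intro n hn; exact ZMod.val_cast_of_lt (Finset.mem_range.1 hn)
  · intro x _; rw [ZMod.natCast_zmod_val]

lemma aux_sum_range_mul (h : ℕ → ℂ) (a b : ℕ) :
    ∑ n ∈ Finset.range (a * b), h n = ∑ j ∈ Finset.range b, ∑ i ∈ Finset.range a, h (i + a * j) := by
  induction b with
  | zero => simp
  | succ b ih =>
    rw [mul_add, mul_one, Finset.sum_range_add, ih, Finset.sum_range_succ]
    congr 1
    apply Finset.sum_congr rfl
    intro i _
    rw [add_comm]

lemma aux_split (p e : ℕ) [Fact p.Prime] (f : ZMod (p ^ e) → ℂ) :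
    (p : ℂ) * ∑ z, f z = ∑ a : ZMod p, ∑ y, f ((a.val : ZMod (p ^ e)) + (p : ZMod (p ^ e)) * y) := by
  have hp : p.Prime := Fact.out
  have : NeZero (p ^ e) := ⟨pow_ne_zero _ hp.ne_zero⟩
  have h1 := aux_sum_range_mul (fun n => f (n : ZMod (p ^ e))) p (p ^ e)
  have h2 := aux_sum_range_mul (fun n => f (n : ZMod (p ^ e))) (p ^ e) p
  rw [mul_comm, h1] at h2
  rw [aux_sum_zmod_range p, aux_sum_zmod_range (p ^ e)]
  have h3 : ∑ j ∈ Finset.range p, ∑ i ∈ Finset.range (p ^ e), f ((i + p ^ e * j : ℕ) : ZMod (p ^ e)) =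
      (p : ℂ) * ∑ n ∈ Finset.range (p ^ e), f (n : ZMod (p ^ e)) := by
    have h4 : ∀ x : ℂ, (p : ℂ) * x = ∑ _j ∈ Finset.range p, x := by
      intro x; rw [Finset.sum_const, Finset.card_range, nsmul_eq_mul]
    rw [h4]
    apply Finset.sum_congr rfl
    intro j _
    apply Finset.sum_congr rfl
    intro i _
    rw [Nat.cast_add, Nat.cast_mul, ZMod.natCast_self, zero_mul, add_zero]
  rw [← h3, ← h2, Finset.sum_comm]
  apply Finset.sum_congr rfl
  intro a ha
  rw [aux_sum_zmod_range (p ^ e)]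
  apply Finset.sum_congr rfl
  intro i _
  rw [ZMod.val_cast_of_lt (Finset.mem_range.1 ha)]
  push_cast
  rfl

lemma aux_isUnit_int (p e : ℕ) [Fact p.Prime] (c : ℤ) (hc : ¬ (p : ℤ) ∣ c) :
    IsUnit (c : ZMod (p ^ e)) := by
  have hp : p.Prime := Fact.out
  rw [ZMod.coe_int_isUnit_iff_isCoprime]
  push_cast
  apply IsCoprime.pow_left
  exact (Prime.coprime_iff_not_dvd (Nat.prime_iff_prime_int.1 hp)).2 hc

lemma aux_isUnit_add (p e : ℕ) [Fact p.Prime] (c x : ZMod (p ^ e)) (hc : IsUnit c) (s : ℕ)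
    (hs : 1 ≤ s) : IsUnit (c + (p : ZMod (p ^ e)) ^ s * x) := by
  have hn : IsNilpotent ((p : ZMod (p ^ e)) ^ s * x) := by
    refine ⟨e, ?_⟩
    rw [mul_pow, ← pow_mul, mul_comm s e, pow_mul]
    have : (p : ZMod (p ^ e)) ^ e = 0 := by
      rw [← Nat.cast_pow, ZMod.natCast_self]
    rw [this, zero_pow (by omega), zero_mul]
  exact hn.isUnit_add_left_of_commute hc (mul_comm _ _)

/-- vanishing -/
lemma aux_vanish (p e : ℕ) [Fact p.Prime] (χ : MulChar (ZMod (p ^ e)) ℂ) (M : ℕ)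
    (hM : ∃ x, χ (1 + (p : ZMod (p ^ e)) ^ M * x) ≠ 1) (s : ℕ) (hs : 1 ≤ s) (hsM : s ≤ M)
    (c : ℤ) (hc : ¬ (p : ℤ) ∣ c) (G : ℤ[X]) (hG : (G.map (Int.castRingHom (ZMod p))).natDegree = 1) :
    ∑ y : ZMod (p ^ e), χ ((c : ZMod (p ^ e)) + (p : ZMod (p ^ e)) ^ s * aeval y G) = 0 := by
  have hp : p.Prime := Fact.out
  have : NeZero (p ^ e) := ⟨pow_ne_zero _ hp.ne_zero⟩
  set R := ZMod (p ^ e)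
  obtain ⟨x, hx⟩ := hM
  have hcu := aux_isUnit_int p e c hc
  obtain ⟨c', hc'⟩ := hcu
  -- G is a permutation
  have hcoef : ∀ j, ((p : ℤ) ∣ G.coeff j) ↔ (G.map (Int.castRingHom (ZMod p))).coeff j = 0 := by
    intro j
    rw [coeff_map]
    simp [ZMod.intCast_zmod_eq_zero_iff_dvd]
  obtain ⟨H, hH⟩ : ∃ H : ℤ[X], G = C (G.coeff 0) + C (G.coeff 1) * X + C (p : ℤ) * H := by
    have : C (p : ℤ) ∣ G - (C (G.coeff 0) + C (G.coeff 1) * X) := by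
      rw [C_dvd_iff_dvd_coeff]
      intro j
      rcases j with _ | _ | j
      · simp
      · rw [coeff_sub, coeff_add, coeff_C_mul, coeff_C, coeff_X]
        simp
      · rw [coeff_sub, coeff_add, coeff_C_mul, coeff_C, coeff_X]
        simp only [show j + 1 + 1 ≠ 0 by omega, if_false, show 1 ≠ j + 1 + 1 by omega, mul_zero, add_zero, sub_zero]
        rw [hcoef]
        exact coeff_eq_zero_of_natDegree_lt (by omega)
    obtain ⟨H, hH⟩ := this
    exact ⟨H, by rw [← hH]; ring⟩
  have hu : ¬ (p : ℤ) ∣ G.coeff 1 := by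
    rw [hcoef]
    intro h0
    have h1 : (G.map (Int.castRingHom (ZMod p))).leadingCoeff = 0 := by rw [leadingCoeff, hG, h0]
    rw [leadingCoeff_eq_zero] at h1
    rw [h1] at hG
    simp at hG
  have hGe : ∀ y : R, aeval y G = (G.coeff 0 : R) + (G.coeff 1 : R) * y + (p : R) * aeval y H := by
    intro y
    conv_lhs => rw [hH]
    simp
  have hperm : Function.Bijective (fun y : R => (aeval y G : R)) := by
    apply Finite.injective_iff_bijective.1
    intro y z hyz
    simp only [hGe] at hyz
    obtain ⟨w, hw⟩ : (y - z) ∣ (aeval y H - aeval z H : R) := by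
      rw [aeval_def, aeval_def, eval₂_eq_eval_map, eval₂_eq_eval_map]
      exact sub_dvd_eval_sub _ _ _
    have h1 : (y - z) * ((G.coeff 1 : R) + (p : R) ^ 1 * w) = 0 := by
      linear_combination hyz - (p : R) * hw
    have h2 := aux_isUnit_add p e _ w (aux_isUnit_int p e _ hu) 1 le_rfl
    exact sub_eq_zero.1 ((h2.mul_left_eq_zero).1 h1)
  have e1 : ∑ y : R, χ ((c : R) + (p : R) ^ s * aeval y G) = ∑ y : R, χ ((c : R) + (p : R) ^ s * y) :=
    Fintype.sum_bijective _ hperm _ _ (fun y => rfl)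
  have e2 : ∑ y : R, χ ((c : R) + (p : R) ^ s * y) = χ c * ∑ y : R, χ (1 + (p : R) ^ s * y) := by
    rw [Finset.mul_sum]
    refine Fintype.sum_equiv (Units.mulLeft c'⁻¹) _ _ ?_
    intro y
    rw [← map_mul]
    congr 1
    rw [← hc', Units.mulLeft_apply]
    have : (c' : R) * ((c'⁻¹ : Rˣ) : R) = 1 := by simp
    linear_combination (-(p : R) ^ s * y) * this
  have e3 : ∑ y : R, χ (1 + (p : R) ^ s * y) = 0 := by
    set x0 := (p : R) ^ (M - s) * x with hx0
    have hx0' : (p : R) ^ s * x0 = (p : R) ^ M * x := by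
      rw [hx0, ← mul_assoc, ← pow_add]; congr 2; omega
    obtain ⟨v, hv⟩ := aux_isUnit_add p e 1 x0 isUnit_one s hs
    have h1 : χ (1 + (p : R) ^ s * x0) * ∑ y : R, χ (1 + (p : R) ^ s * y) = ∑ y : R, χ (1 + (p : R) ^ s * y) := by
      rw [Finset.mul_sum]
      refine Fintype.sum_equiv ((Units.mulLeft v).trans (Equiv.addLeft x0)) _ _ ?_
      intro y
      rw [← map_mul]
      congr 1
      simp only [Equiv.trans_apply, Units.mulLeft_apply, Equiv.coe_addLeft, hv]
      ring
    rw [hx0'] at h1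
    by_contra h0
    exact hx (mul_right_cancel₀ h0 (h1.trans (one_mul _).symm))
  rw [e1, e2, e3, mul_zero]

lemma aux_local_poly (p : ℕ) [Fact p.Prime] (G : ℤ[X]) (a : ZMod p)
    (hder : derivative (G.map (Int.castRingHom (ZMod p))) ≠ 0) :
    ∃ (t : ℕ) (Gn : ℤ[X]), 1 ≤ t ∧
      t ≤ rootMultiplicity a (derivative (G.map (Int.castRingHom (ZMod p)))) + 1 ∧
      G.comp (C (a.val : ℤ) + C (p : ℤ) * X) = C (G.eval (a.val : ℤ)) + C ((p : ℤ) ^ t) * Gn ∧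
      1 ≤ (Gn.map (Int.castRingHom (ZMod p))).natDegree ∧
      (Gn.map (Int.castRingHom (ZMod p))).natDegree ≤
        rootMultiplicity a (derivative (G.map (Int.castRingHom (ZMod p)))) + 1 := by
  have hp : p.Prime := Fact.out
  have hpI : Prime (p : ℤ) := Nat.prime_iff_prime_int.1 hp
  have hp0 : (p : ℤ) ≠ 0 := hpI.ne_zero
  set φ := Int.castRingHom (ZMod p) with hφ
  set z : ℤ := (a.val : ℤ) with hz
  have hza : φ z = a := by simp [hφ, hz]
  set μ := rootMultiplicity a (derivative (G.map φ)) with hμ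
  have hcoef : ∀ (P : ℤ[X]) (j : ℕ), ((p : ℤ) ∣ P.coeff j) ↔ (P.map φ).coeff j = 0 := by
    intro P j
    rw [coeff_map]
    simp [hφ, ZMod.intCast_zmod_eq_zero_iff_dvd]
  set T := G.comp (X + C z) with hT
  have hTμ : ¬ (p : ℤ) ∣ T.coeff (μ + 1) := by
    rw [hcoef]
    intro h0
    have h1 : (derivative (T.map φ)).coeff μ = 0 := by rw [coeff_derivative, h0, zero_mul]
    have h2 : derivative (T.map φ) = (derivative (G.map φ)).comp (X + C a) := by
      rw [hT, Polynomial.map_comp, derivative_comp]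
      simp only [Polynomial.map_add, map_X, map_C, hza]
      simp
    obtain ⟨Q, hQ, hQ'⟩ := exists_eq_pow_rootMultiplicity_mul_and_not_dvd _ hder a
    rw [← hμ] at hQ
    rw [h2, hQ, mul_comp, pow_comp, sub_comp, X_comp, C_comp, add_sub_cancel_right,
      coeff_X_pow_mul', if_pos le_rfl, Nat.sub_self, coeff_zero_eq_eval_zero, eval_comp] at h1
    simp only [eval_add, eval_X, eval_C, zero_add] at h1
    exact hQ' (dvd_iff_isRoot.2 h1)
  set H := G.comp (C z + C (p : ℤ) * X) - C (G.eval z) with hH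
  have hHT : G.comp (C z + C (p : ℤ) * X) = T.comp (C (p : ℤ) * X) := by
    rw [hT, comp_assoc]
    congr 1
    simp [add_comm]
  have hHj : ∀ j, 1 ≤ j → H.coeff j = T.coeff j * (p : ℤ) ^ j := by
    intro j hj
    rw [hH, hHT, coeff_sub, comp_C_mul_X_coeff, coeff_C, if_neg (by omega), sub_zero]
  have hH0c : H.coeff 0 = 0 := by
    rw [hH, coeff_zero_eq_eval_zero]
    simp [eval_comp]
  have hH0 : H ≠ 0 := by
    intro h0
    have := hHj (μ + 1) (by omega)
    rw [h0, coeff_zero] at this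
    have h3 : T.coeff (μ + 1) = 0 := by
      rcases mul_eq_zero.1 this.symm with h | h
      · exact h
      · exact absurd h (pow_ne_zero _ hp0)
    rw [h3] at hTμ
    exact hTμ (dvd_zero _)
  have hprime : Prime (C (p : ℤ) : ℤ[X]) := prime_C_iff.2 hpI
  obtain ⟨t, Gn, hGn', hGn⟩ : ∃ (t : ℕ) (Gn : ℤ[X]), ¬ C (p : ℤ) ∣ Gn ∧ H = C (p : ℤ) ^ t * Gn := by
    have hfin : FiniteMultiplicity (C (p : ℤ) : ℤ[X]) H := FiniteMultiplicity.of_prime_left hprime hH0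
    obtain ⟨c, hc, hc'⟩ := hfin.exists_eq_pow_mul_and_not_dvd
    exact ⟨_, c, hc', hc⟩
  rw [← C_pow] at hGn
  have hg : ∀ j, H.coeff j = (p : ℤ) ^ t * Gn.coeff j := by
    intro j; rw [hGn, coeff_C_mul]
  have ht1 : 1 ≤ t := by
    by_contra h
    have h0 : t = 0 := by omega
    apply hGn'
    rw [C_dvd_iff_dvd_coeff]
    intro j
    have h1 := hg j
    rw [h0, pow_zero, one_mul] at h1
    rw [← h1]
    rcases j with _ | j
    · rw [hH0c]; exact dvd_zero _
    · rw [hHj _ (by omega)]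
      exact (dvd_pow_self _ (by omega)).mul_left _
  have ht2 : t ≤ μ + 1 := by
    by_contra h
    push Not at h
    have h1 := hg (μ + 1)
    rw [hHj _ (by omega)] at h1
    obtain ⟨k, hk⟩ := Nat.exists_eq_add_of_lt h
    apply hTμ
    have h2 : T.coeff (μ + 1) * (p : ℤ) ^ (μ + 1) = ((p : ℤ) * ((p : ℤ) ^ k * Gn.coeff (μ + 1))) * (p : ℤ) ^ (μ + 1) := by
      rw [h1, hk]; ring
    rw [mul_right_cancel₀ (pow_ne_zero _ hp0) h2]
    exact dvd_mul_right _ _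
  have hmap0 : Gn.map φ ≠ 0 := by
    intro h0
    apply hGn'
    rw [C_dvd_iff_dvd_coeff]
    intro j
    rw [hcoef, h0, coeff_zero]
  have hbig : ∀ j, t < j → (Gn.map φ).coeff j = 0 := by
    intro j hj
    rw [← hcoef]
    have h1 := hg j
    rw [hHj _ (by omega)] at h1
    obtain ⟨k, hk⟩ := Nat.exists_eq_add_of_lt hj
    have h2 : (p : ℤ) ^ t * Gn.coeff j = (p : ℤ) ^ t * ((p : ℤ) * ((p : ℤ) ^ k * T.coeff j)) := by
      rw [← h1, hk]; ring
    rw [mul_left_cancel₀ (pow_ne_zero _ hp0) h2]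
    exact dvd_mul_right _ _
  refine ⟨t, Gn, ht1, ht2, ?_, ?_, ?_⟩
  · rw [← hGn, hH]; ring
  · by_contra h
    have h0 : (Gn.map φ).natDegree = 0 := by omega
    have h1 : Gn.coeff 0 = 0 := by
      have := hg 0
      rw [hH0c] at this
      rcases mul_eq_zero.1 this.symm with h | h
      · exact absurd h (pow_ne_zero _ hp0)
      · exact h
    apply hmap0
    rw [eq_C_of_natDegree_eq_zero h0, coeff_map, h1]
    simp
  · refine le_trans ?_ ht2
    rw [natDegree_le_iff_coeff_eq_zero]
    exact fun j hj => hbig j hj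

/-- the property used for the induction -/
def AuxInd (p e : ℕ) (χ : MulChar (ZMod (p ^ e)) ℂ) (D M : ℕ) (θ : ℝ) (σ : ℕ) : Prop :=
  ∀ (c : ℤ) (G : ℤ[X]) (μ : ℕ), ¬ (p : ℤ) ∣ c → 1 ≤ μ → μ + 1 ≤ D →
    1 ≤ (G.map (Int.castRingHom (ZMod p))).natDegree →
    (G.map (Int.castRingHom (ZMod p))).natDegree ≤ μ + 1 →
    ‖∑' y : ZMod (p ^ e), χ ((c : ZMod (p ^ e)) + (p : ZMod (p ^ e)) ^ σ * aeval y G)‖ * θ ^ M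
      ≤ (p : ℝ) ^ e * μ * θ ^ σ

lemma aux_trivial (p e : ℕ) [Fact p.Prime] (χ : MulChar (ZMod (p ^ e)) ℂ) (g : ZMod (p ^ e) → ZMod (p ^ e)) :
    ‖∑' y, χ (g y)‖ ≤ (p : ℝ) ^ e := by
  have hp : p.Prime := Fact.out
  have : NeZero (p ^ e) := ⟨pow_ne_zero _ hp.ne_zero⟩
  rw [tsum_fintype]
  calc ‖∑ y, χ (g y)‖ ≤ ∑ y : ZMod (p ^ e), (1 : ℝ) :=
        norm_sum_le_of_le _ (fun y _ => DirichletCharacter.norm_le_one χ _)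
    _ = _ := by simp [ZMod.card]

lemma aux_local (p e : ℕ) [Fact p.Prime] (χ : MulChar (ZMod (p ^ e)) ℂ) (D M : ℕ) (θ : ℝ) (hθ : 1 ≤ θ)
    (hM : ∃ x, χ (1 + (p : ZMod (p ^ e)) ^ M * x) ≠ 1) (σ : ℕ) (hσ : σ + 1 ≤ M)
    (IH : ∀ σ', σ < σ' → AuxInd p e χ D M θ σ') (c : ℤ) (G : ℤ[X]) (a : ZMod p)
    (hder : derivative (G.map (Int.castRingHom (ZMod p))) ≠ 0)
    (hc : ¬ (p : ℤ) ∣ c + (p : ℤ) ^ σ * G.eval (a.val : ℤ)) (μ : ℕ)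
    (hμ : μ = rootMultiplicity a (derivative (G.map (Int.castRingHom (ZMod p))))) (hμD : μ + 1 ≤ D) :
    ‖∑' y : ZMod (p ^ e), χ ((c : ZMod (p ^ e)) + (p : ZMod (p ^ e)) ^ σ *
        aeval ((a.val : ZMod (p ^ e)) + (p : ZMod (p ^ e)) * y) G)‖ * θ ^ M
      ≤ (p : ℝ) ^ e * μ * θ ^ (σ + D) ∧
    ‖∑' y : ZMod (p ^ e), χ ((c : ZMod (p ^ e)) + (p : ZMod (p ^ e)) ^ σ *
        aeval ((a.val : ZMod (p ^ e)) + (p : ZMod (p ^ e)) * y) G)‖ ≤ (p : ℝ) ^ e * μ := by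
  have hp : p.Prime := Fact.out
  have : NeZero (p ^ e) := ⟨pow_ne_zero _ hp.ne_zero⟩
  obtain ⟨t, Gn, ht1, ht2, hcomp, hd1, hd2⟩ := aux_local_poly p G a hder
  rw [← hμ] at ht2 hd2
  set c0 : ℤ := c + (p : ℤ) ^ σ * G.eval (a.val : ℤ) with hc0
  have hrew : ∀ y : ZMod (p ^ e), (c : ZMod (p ^ e)) + (p : ZMod (p ^ e)) ^ σ *
        aeval ((a.val : ZMod (p ^ e)) + (p : ZMod (p ^ e)) * y) G =
      (c0 : ZMod (p ^ e)) + (p : ZMod (p ^ e)) ^ (σ + t) * aeval y Gn := by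
    intro y
    have hC : ∀ n : ℤ, aeval y (C n : ℤ[X]) = (n : ZMod (p ^ e)) := by
      intro n; rw [aeval_C]; rfl
    have h1 : aeval ((a.val : ZMod (p ^ e)) + (p : ZMod (p ^ e)) * y) G =
        aeval y (G.comp (C (a.val : ℤ) + C (p : ℤ) * X)) := by
      rw [aeval_comp, aeval_add, aeval_mul, hC, hC, aeval_X, Int.cast_natCast, Int.cast_natCast]
    rw [h1, hcomp, hc0, aeval_add, aeval_mul, hC, hC]
    push_cast
    ring
  simp only [hrew]
  rcases Nat.eq_zero_or_pos μ with h0 | hpos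
  · have ht : t = 1 := by omega
    have hz := aux_vanish p e χ M hM (σ + t) (by omega) (by omega) c0 hc Gn (by omega)
    rw [tsum_fintype, hz, h0]
    simp
  · have hpe : (0 : ℝ) ≤ (p : ℝ) ^ e := by positivity
    constructor
    · refine (IH (σ + t) (by omega) c0 Gn μ hc hpos hμD hd1 hd2).trans ?_
      gcongr
      omega
    · refine (aux_trivial p e χ _).trans ?_
      have : (1 : ℝ) ≤ μ := by exact_mod_cast hpos
      nlinarith

lemma aux_sum_mult (p : ℕ) [Fact p.Prime] (P : (ZMod p)[X]) :
    ∑ a : ZMod p, rootMultiplicity a P ≤ P.natDegree := by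
  classical
  refine le_trans (le_of_eq ?_) (card_roots' P)
  simp only [← count_roots]
  exact Multiset.sum_count_eq_card (s := Finset.univ) (fun a _ => Finset.mem_univ _)

lemma aux_mult_le (p : ℕ) [Fact p.Prime] (P : (ZMod p)[X]) (a : ZMod p) :
    rootMultiplicity a P ≤ P.natDegree :=
  (Finset.single_le_sum (f := fun a => rootMultiplicity a P) (fun _ _ => Nat.zero_le _)
    (Finset.mem_univ a)).trans (aux_sum_mult p P)

lemma aux_der_ne (p : ℕ) [Fact p.Prime] (P : (ZMod p)[X]) (h1 : 1 ≤ P.natDegree)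
    (h2 : P.natDegree < p) : derivative P ≠ 0 := by
  intro h0
  have h3 : (derivative P).coeff (P.natDegree - 1) = 0 := by rw [h0, coeff_zero]
  rw [coeff_derivative, Nat.sub_add_cancel h1] at h3
  rcases mul_eq_zero.1 h3 with h | h
  · rw [coeff_natDegree, leadingCoeff_eq_zero] at h
    rw [h] at h1
    simp at h1
  · have : ((P.natDegree : ℕ) : ZMod p) = 0 := by
      rw [← h]
      conv_lhs => rw [← Nat.sub_add_cancel h1]
      push_cast; rfl
    rw [ZMod.natCast_eq_zero_iff] at this
    exact absurd (Nat.le_of_dvd h1 this) (by omega)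

lemma aux_ind (p e : ℕ) [Fact p.Prime] (χ : MulChar (ZMod (p ^ e)) ℂ) (D M : ℕ) (θ : ℝ) (hθ : 1 ≤ θ)
    (hθD : θ ^ D = p) (hDp : D < p)
    (hM : ∃ x, χ (1 + (p : ZMod (p ^ e)) ^ M * x) ≠ 1) (n : ℕ) :
    ∀ σ, 1 ≤ σ → M ≤ σ + n → AuxInd p e χ D M θ σ := by
  have hp : p.Prime := Fact.out
  have hpI : Prime (p : ℤ) := Nat.prime_iff_prime_int.1 hp
  have hp0 : (0 : ℝ) < p := by exact_mod_cast hp.pos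
  induction n with
  | zero =>
    intro σ h1 hσ c G μ hc hμ hμD hG1 hG2
    have hle := aux_trivial p e χ (fun y => (c : ZMod (p ^ e)) + (p : ZMod (p ^ e)) ^ σ * aeval y G)
    have h3 : θ ^ M ≤ θ ^ σ := pow_le_pow_right₀ hθ (by omega)
    have h4 : (1 : ℝ) ≤ μ := by exact_mod_cast hμ
    have h5 : (0 : ℝ) ≤ (p : ℝ) ^ e := by positivity
    have h6 : (0 : ℝ) ≤ θ ^ M := by positivity
    calc _ ≤ (p : ℝ) ^ e * θ ^ M := by gcongr
      _ ≤ (p : ℝ) ^ e * μ * θ ^ σ := by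
        apply mul_le_mul _ h3 h6 (by positivity)
        nlinarith
  | succ n ih =>
    intro σ h1 hσ
    by_cases hσM : M ≤ σ + n
    · exact ih σ h1 hσM
    intro c G μ hc hμ hμD hG1 hG2
    set Gb := G.map (Int.castRingHom (ZMod p)) with hGb
    have hder : derivative Gb ≠ 0 := aux_der_ne p Gb hG1 (by omega)
    have hdd : (derivative Gb).natDegree ≤ μ := (natDegree_derivative_le Gb).trans (by omega)
    have hsum := aux_split p e (fun z => χ ((c : ZMod (p ^ e)) + (p : ZMod (p ^ e)) ^ σ * aeval z G))
    have IH : ∀ σ', σ < σ' → AuxInd p e χ D M θ σ' := fun σ' h => ih σ' (by omega) (by omega)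
    have hloc : ∀ a : ZMod p, ‖∑ y : ZMod (p ^ e), χ ((c : ZMod (p ^ e)) + (p : ZMod (p ^ e)) ^ σ *
        aeval ((a.val : ZMod (p ^ e)) + (p : ZMod (p ^ e)) * y) G)‖ * θ ^ M
        ≤ (p : ℝ) ^ e * (rootMultiplicity a (derivative Gb) : ℕ) * θ ^ (σ + D) := by
      intro a
      rw [← tsum_fintype (L := .unconditional _)]
      refine (aux_local p e χ D M θ hθ hM σ (by omega) IH c G a hder ?_ _ rfl ?_).1
      · intro hdvd
        apply hc
        exact (Int.dvd_iff_dvd_of_dvd_add hdvd).2 ((dvd_pow_self _ (by omega)).mul_right _)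
      · have := aux_mult_le p (derivative Gb) a
        rw [← hGb]
        omega
    rw [tsum_fintype]
    have h7 : (p : ℝ) * (‖∑ z : ZMod (p ^ e), χ ((c : ZMod (p ^ e)) + (p : ZMod (p ^ e)) ^ σ * aeval z G)‖ * θ ^ M)
        ≤ (p : ℝ) * ((p : ℝ) ^ e * μ * θ ^ σ) := by
      calc _ = ‖(p : ℂ) * ∑ z : ZMod (p ^ e), χ ((c : ZMod (p ^ e)) + (p : ZMod (p ^ e)) ^ σ * aeval z G)‖ * θ ^ M := by
            rw [norm_mul, Complex.norm_natCast]; ring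
        _ ≤ (∑ a : ZMod p, ‖∑ y : ZMod (p ^ e), χ ((c : ZMod (p ^ e)) + (p : ZMod (p ^ e)) ^ σ *
        aeval ((a.val : ZMod (p ^ e)) + (p : ZMod (p ^ e)) * y) G)‖) * θ ^ M := by
            rw [hsum]
            gcongr
            exact norm_sum_le _ _
        _ ≤ ∑ a : ZMod p, (p : ℝ) ^ e * (rootMultiplicity a (derivative Gb) : ℕ) * θ ^ (σ + D) := by
            rw [Finset.sum_mul]
            exact Finset.sum_le_sum (fun a _ => hloc a)
        _ = (p : ℝ) ^ e * ((∑ a : ZMod p, rootMultiplicity a (derivative Gb) : ℕ) : ℝ) * θ ^ (σ + D) := by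
            rw [← Finset.sum_mul, ← Finset.mul_sum, Nat.cast_sum]
        _ ≤ (p : ℝ) ^ e * (μ : ℝ) * θ ^ (σ + D) := by
            gcongr
            exact (aux_sum_mult p _).trans hdd
        _ = _ := by rw [pow_add, hθD]; ring
    exact le_of_mul_le_mul_left h7 hp0

open Classical in
lemma aux_top (p e : ℕ) [Fact p.Prime] (he : 1 ≤ e) (χ : MulChar (ZMod (p ^ e)) ℂ) (D M : ℕ) (θ : ℝ) (hθ : 1 ≤ θ)
    (hθD : θ ^ D = p) (hDp : D < p)
    (hM : ∃ x, χ (1 + (p : ZMod (p ^ e)) ^ M * x) ≠ 1) (hM1 : 1 ≤ M) (hD : 1 ≤ D) (F : ℤ[X])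
    (hF : (F.map (Int.castRingHom (ZMod p))).natDegree = D) :
    ‖∑ z : ZMod (p ^ e), if IsUnit z then χ (aeval z F) else 0‖ * θ ^ M ≤ (p : ℝ) ^ e * (D - 1) ∧
    ‖∑ z : ZMod (p ^ e), if IsUnit z then χ (aeval z F) else 0‖ * p ≤ (p : ℝ) ^ e * (D - 1) := by
  have hp : p.Prime := Fact.out
  have hpI : Prime (p : ℤ) := Nat.prime_iff_prime_int.1 hp
  have hp0 : (0 : ℝ) < p := by exact_mod_cast hp.pos
  set Gb := F.map (Int.castRingHom (ZMod p)) with hGb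
  have hder : derivative Gb ≠ 0 := aux_der_ne p Gb (by omega) (by omega)
  have hdd : (derivative Gb).natDegree ≤ D - 1 := (natDegree_derivative_le Gb).trans (by omega)
  have hsum := aux_split p e (fun z => if IsUnit z then χ (aeval z F) else 0)
  set R := ZMod (p ^ e) with hR
  have hpnil : ¬ IsUnit (p : R) := by
    intro h
    have h2 := h.pow e
    rw [← Nat.cast_pow, ZMod.natCast_self] at h2
    have : Nontrivial R := by
      have : Fact (1 < p ^ e) := ⟨Nat.one_lt_pow (by omega) hp.one_lt⟩
      exact ZMod.nontrivial _
    exact not_isUnit_zero h2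
  have hloc : ∀ a : ZMod p, ‖∑ y : R, (if IsUnit ((a.val : R) + (p : R) * y) then
      χ (aeval ((a.val : R) + (p : R) * y) F) else 0)‖ * θ ^ M
        ≤ (p : ℝ) ^ e * (rootMultiplicity a (derivative Gb) : ℕ) * θ ^ D ∧
      ‖∑ y : R, (if IsUnit ((a.val : R) + (p : R) * y) then
      χ (aeval ((a.val : R) + (p : R) * y) F) else 0)‖
        ≤ (p : ℝ) ^ e * (rootMultiplicity a (derivative Gb) : ℕ) := by
    intro a
    by_cases ha : a = 0
    · have h0 : ∀ y : R, ¬ IsUnit ((a.val : R) + (p : R) * y) := by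
        intro y hy
        rw [ha, ZMod.val_zero, Nat.cast_zero, zero_add] at hy
        exact hpnil (isUnit_of_mul_isUnit_left hy)
      simp only [h0, if_false, Finset.sum_const_zero, norm_zero, zero_mul]
      constructor <;> positivity
    · have hu : ∀ y : R, IsUnit ((a.val : R) + (p : R) * y) := by
        intro y
        have := aux_isUnit_add p e (a.val : R) y (by
          have := aux_isUnit_int p e (a.val : ℤ) (by
            intro h
            apply ha
            have h2 := Int.natCast_dvd_natCast.1 h
            have h3 := Nat.eq_zero_of_dvd_of_lt h2 (ZMod.val_lt a)
            exact (ZMod.val_eq_zero a).1 h3)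
          rwa [Int.cast_natCast] at this) 1 le_rfl
        rwa [pow_one] at this
      simp only [hu, if_true]
      by_cases hFa : (p : ℤ) ∣ F.eval (a.val : ℤ)
      · have hz : ∀ y : R, χ (aeval ((a.val : R) + (p : R) * y) F) = 0 := by
          intro y
          apply MulChar.map_nonunit
          intro hun
          apply hpnil
          have h1 : (p : R) * y ∣ aeval ((a.val : R) + (p : R) * y) F - aeval (a.val : R) F := by
            rw [aeval_def, aeval_def, eval₂_eq_eval_map, eval₂_eq_eval_map]
            have := sub_dvd_eval_sub ((a.val : R) + (p : R) * y) (a.val : R) (F.map (algebraMap ℤ R))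
            rwa [add_sub_cancel_left] at this
          have h2 : aeval (a.val : R) F = ((F.eval (a.val : ℤ) : ℤ) : R) := by
            have := aeval_algebraMap_apply R (a.val : ℤ) F
            simpa using this
          have h3 : (p : R) ∣ aeval (a.val : R) F := by
            rw [h2]
            obtain ⟨k, hk⟩ := hFa
            rw [hk]
            rw [Int.cast_mul, Int.cast_natCast]
            exact dvd_mul_right (p : R) _
          have h4 : (p : R) ∣ aeval ((a.val : R) + (p : R) * y) F := by
            have := dvd_add (dvd_trans (dvd_mul_right (p : R) y) h1) h3
            rwa [sub_add_cancel] at this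
          exact isUnit_of_dvd_unit (x := (p : R)) h4 hun
        simp only [hz, Finset.sum_const_zero, norm_zero, zero_mul]
        constructor <;> positivity
      · have h5 := aux_local p e χ D M θ hθ hM 0 (by omega)
          (fun σ' h => aux_ind p e χ D M θ hθ hθD hDp hM M σ' (by omega) (by omega)) 0 F a hder
          (by simpa using hFa) _ rfl (by
            have := aux_mult_le p (derivative Gb) a
            rw [← hGb]
            omega)
        simp only [tsum_fintype, Int.cast_zero, pow_zero, one_mul, zero_add] at h5
        exact h5
  have hcast : ((D - 1 : ℕ) : ℝ) = (D : ℝ) - 1 := by rw [Nat.cast_sub hD]; simp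
  have hs2 : ((∑ a : ZMod p, rootMultiplicity a (derivative Gb) : ℕ) : ℝ) ≤ (D : ℝ) - 1 := by
    rw [← hcast]
    exact_mod_cast (aux_sum_mult p _).trans hdd
  set S := ∑ z : R, (if IsUnit z then χ (aeval z F) else 0) with hS
  have h8 : (p : ℝ) * ‖S‖ ≤ ∑ a : ZMod p, ‖∑ y : R, (if IsUnit ((a.val : R) + (p : R) * y) then
      χ (aeval ((a.val : R) + (p : R) * y) F) else 0)‖ := by
    calc (p : ℝ) * ‖S‖ = ‖(p : ℂ) * S‖ := by rw [norm_mul, Complex.norm_natCast]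
      _ ≤ _ := by rw [hsum]; exact norm_sum_le _ _
  constructor
  · have h7 : (p : ℝ) * (‖S‖ * θ ^ M) ≤ (p : ℝ) * ((p : ℝ) ^ e * (D - 1)) := by
      calc _ = ((p : ℝ) * ‖S‖) * θ ^ M := by ring
        _ ≤ _ * θ ^ M := mul_le_mul_of_nonneg_right h8 (by positivity)
        _ ≤ ∑ a : ZMod p, (p : ℝ) ^ e * (rootMultiplicity a (derivative Gb) : ℕ) * θ ^ D := by
            rw [Finset.sum_mul]
            exact Finset.sum_le_sum (fun a _ => (hloc a).1)
        _ = (p : ℝ) ^ e * ((∑ a : ZMod p, rootMultiplicity a (derivative Gb) : ℕ) : ℝ) * θ ^ D := by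
            rw [← Finset.sum_mul, ← Finset.mul_sum, Nat.cast_sum]
        _ ≤ (p : ℝ) ^ e * ((D : ℝ) - 1) * θ ^ D := by gcongr
        _ = _ := by rw [hθD]; ring
    exact le_of_mul_le_mul_left h7 hp0
  · rw [mul_comm]
    refine h8.trans ?_
    calc _ ≤ ∑ a : ZMod p, (p : ℝ) ^ e * (rootMultiplicity a (derivative Gb) : ℕ) :=
          Finset.sum_le_sum (fun a _ => (hloc a).2)
      _ = (p : ℝ) ^ e * ((∑ a : ZMod p, rootMultiplicity a (derivative Gb) : ℕ) : ℝ) := by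
            rw [← Finset.mul_sum, Nat.cast_sum]
      _ ≤ _ := by gcongr

lemma aux_cast_split (p e : ℕ) [Fact p.Prime] (he : 1 ≤ e) (a : ZMod p) (y : ZMod (p ^ e)) :
    ZMod.castHom (dvd_pow_self p (by omega : e ≠ 0)) (ZMod p)
      ((a.val : ZMod (p ^ e)) + (p : ZMod (p ^ e)) * y) = a := by
  rw [map_add, map_mul, map_natCast, map_natCast]
  simp

lemma aux_fiber (p e : ℕ) [Fact p.Prime] (he : 1 ≤ e) (g : ZMod p → ℂ) :
    (p : ℂ) * ∑ z : ZMod (p ^ e), g (ZMod.castHom (dvd_pow_self p (by omega : e ≠ 0)) (ZMod p) z)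
      = (p : ℂ) ^ e * ∑ a : ZMod p, g a := by
  rw [aux_split]
  simp only [aux_cast_split p e he]
  rw [Finset.mul_sum]
  refine Finset.sum_congr rfl fun a _ => ?_
  simp [ZMod.card]

lemma aux_unit_iff (p e : ℕ) [Fact p.Prime] (he : 1 ≤ e) (z : ZMod (p ^ e)) :
    IsUnit z ↔ ZMod.castHom (dvd_pow_self p (by omega : e ≠ 0)) (ZMod p) z ≠ 0 := by
  have hp : p.Prime := Fact.out
  obtain ⟨n, rfl⟩ := ZMod.natCast_zmod_surjective z
  rw [map_natCast, ZMod.isUnit_iff_coprime, Ne, ZMod.natCast_eq_zero_iff,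
    Nat.coprime_pow_right_iff (by omega), Nat.coprime_comm, hp.coprime_iff_not_dvd]

lemma aux_cast_aeval (p e : ℕ) [Fact p.Prime] (he : 1 ≤ e) (F : ℤ[X]) (z : ZMod (p ^ e)) :
    ZMod.castHom (dvd_pow_self p (by omega : e ≠ 0)) (ZMod p) (aeval z F) =
      (F.map (Int.castRingHom (ZMod p))).eval
        (ZMod.castHom (dvd_pow_self p (by omega : e ≠ 0)) (ZMod p) z) := by
  rw [eval_map, aeval_def, hom_eval₂]
  congr 1
  exact Subsingleton.elim _ _

lemma aux_changeLevel_apply (p e : ℕ) [Fact p.Prime] (he : 1 ≤ e) (ψ : DirichletCharacter ℂ p)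
    (z : ZMod (p ^ e)) :
    DirichletCharacter.changeLevel (dvd_pow_self p (by omega : e ≠ 0)) ψ z =
      ψ (ZMod.castHom (dvd_pow_self p (by omega : e ≠ 0)) (ZMod p) z) := by
  by_cases hz : IsUnit z
  · obtain ⟨u, rfl⟩ := hz
    rw [DirichletCharacter.changeLevel_eq_cast_of_dvd]
    rfl
  · rw [MulChar.map_nonunit _ hz, MulChar.map_nonunit]
    rw [aux_unit_iff p e he, not_not] at hz
    rw [hz]
    exact not_isUnit_zero

open Classical in
lemma aux_small (p e D : ℕ) [Fact p.Prime] (hp : 3 ≤ p) (he : 1 ≤ e)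
    (χ : DirichletCharacter ℂ (p ^ e)) (hχ : χ ≠ 1)
    (hf : χ.FactorsThrough p) (hD : 1 ≤ D) (F : ℤ[X])
    (hF : (F.map (Int.castRingHom (ZMod p))).natDegree = D)
    (hsep : (F.map (Int.castRingHom (ZMod p))).Separable) :
    ‖∑ z : ZMod (p ^ e), if IsUnit z then χ (aeval z F) else 0‖ * Real.sqrt p ≤
      (p : ℝ) ^ e * D := by
  have hp0 : (0 : ℝ) < p := by exact_mod_cast (by omega : 0 < p)
  obtain ⟨hdv, ψ, hψ⟩ := hf
  have hψ1 : ψ ≠ 1 := by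
    rintro rfl
    apply hχ
    rw [hψ, DirichletCharacter.changeLevel_one]
  set Fb := F.map (Int.castRingHom (ZMod p)) with hFb
  have hfib := aux_fiber p e he (fun a => if a ≠ 0 then ψ (Fb.eval a) else 0)
  have hS : ∑ z : ZMod (p ^ e), (if IsUnit z then χ (aeval z F) else 0) =
      ∑ z : ZMod (p ^ e), (fun a : ZMod p => if a ≠ 0 then ψ (Fb.eval a) else 0)
        (ZMod.castHom (dvd_pow_self p (by omega : e ≠ 0)) (ZMod p) z) := by
    refine Finset.sum_congr rfl fun z _ => ?_
    simp only [aux_unit_iff p e he, hψ]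
    split_ifs
    · rw [aux_changeLevel_apply p e he, aux_cast_aeval p e he]
    · rfl
  rw [← hS] at hfib
  have hw := aux_weil p hp Fb hsep (by omega) ψ hψ1
  have hsplit : ∑ a : ZMod p, (if a ≠ 0 then ψ (Fb.eval a) else 0) =
      ∑ a : ZMod p, ψ (Fb.eval a) - ψ (Fb.eval 0) := by
    rw [eq_sub_iff_add_eq]
    have : ψ (Fb.eval 0) = ∑ a : ZMod p, if a = 0 then ψ (Fb.eval a) else 0 := by simp
    rw [this, ← Finset.sum_add_distrib]
    refine Finset.sum_congr rfl fun a _ => ?_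
    by_cases h : a = 0 <;> simp [h]
  have hsq : 1 ≤ Real.sqrt p := by
    rw [Real.one_le_sqrt]; exact_mod_cast (by omega : 1 ≤ p)
  have hg : ‖∑ a : ZMod p, (if a ≠ 0 then ψ (Fb.eval a) else 0)‖ ≤ D * Real.sqrt p := by
    rw [hsplit]
    refine (norm_sub_le _ _).trans ?_
    have := DirichletCharacter.norm_le_one ψ (Fb.eval 0)
    rw [hF] at hw
    linarith
  have hn := congrArg norm hfib
  rw [norm_mul, norm_mul, norm_pow, Complex.norm_natCast] at hn
  have hss : Real.sqrt p * Real.sqrt p = p := Real.mul_self_sqrt hp0.le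
  have hpe : (0 : ℝ) < (p : ℝ) ^ e := by positivity
  set S := ‖∑ z : ZMod (p ^ e), if IsUnit z then χ (aeval z F) else 0‖
  have h1 : (S * Real.sqrt p) * Real.sqrt p ≤ ((p : ℝ) ^ e * D) * Real.sqrt p := by
    calc (S * Real.sqrt p) * Real.sqrt p = p * S := by rw [mul_assoc, hss, mul_comm]
      _ = _ := hn
      _ ≤ (p : ℝ) ^ e * (D * Real.sqrt p) := by gcongr
      _ = _ := by ring
  exact le_of_mul_le_mul_right h1 (by linarith)

lemma aux_not_factors (p e M : ℕ) [Fact p.Prime] (hMe : M ≤ e)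
    (χ : DirichletCharacter ℂ (p ^ e)) (hf : ¬ χ.FactorsThrough (p ^ M)) :
    ∃ x : ZMod (p ^ e), χ (1 + (p : ZMod (p ^ e)) ^ M * x) ≠ 1 := by
  by_contra! hcon
  apply hf
  have hdv : p ^ M ∣ p ^ e := pow_dvd_pow _ hMe
  rw [DirichletCharacter.factorsThrough_iff_ker_unitsMap hdv]
  intro u hu
  rw [MonoidHom.mem_ker] at hu ⊢
  have h1 : ZMod.castHom hdv (ZMod (p ^ M)) ((u : ZMod (p ^ e)) - 1) = 0 := by
    have := congrArg Units.val hu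
    rw [map_sub, map_one, sub_eq_zero]
    exact this
  obtain ⟨n, hn⟩ := ZMod.natCast_zmod_surjective ((u : ZMod (p ^ e)) - 1)
  rw [← hn, map_natCast, ZMod.natCast_eq_zero_iff] at h1
  obtain ⟨k, rfl⟩ := h1
  ext
  rw [MulChar.coe_toUnitHom, Units.val_one]
  have := hcon (k : ZMod (p ^ e))
  rw [← this]
  congr 1
  push_cast at hn
  rw [hn]; ring

open Classical in
lemma aux_bound (p e D m : ℕ) [Fact p.Prime] (hDp : 2 * D + 1 < p) (he : 1 ≤ e)
    (χ : DirichletCharacter ℂ (p ^ e)) (hm : χ.conductor = p ^ m) (hm1 : 1 ≤ m)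
    (hD : 1 ≤ D) (F : ℤ[X])
    (hF : (F.map (Int.castRingHom (ZMod p))).natDegree = D)
    (hsep : (F.map (Int.castRingHom (ZMod p))).Separable) :
    ‖∑ z : ZMod (p ^ e), if IsUnit z then χ (aeval z F) else 0‖ * (p : ℝ) ^ ((m : ℝ) / (D + 1)) ≤
      (p : ℝ) ^ e * D := by
  have hp : p.Prime := Fact.out
  have hp0 : (0 : ℝ) < p := by exact_mod_cast hp.pos
  have hp1 : (1 : ℝ) ≤ p := by exact_mod_cast hp.one_lt.le
  have hD1 : (1 : ℝ) ≤ D := by exact_mod_cast hD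
  have hpe : (0 : ℝ) < (p : ℝ) ^ e := by positivity
  rcases Nat.lt_or_ge m 2 with h2 | h2
  · have : m = 1 := by omega
    subst this
    have hχ : χ ≠ 1 := by
      rintro rfl
      rw [DirichletCharacter.conductor_one] at hm
      rw [pow_one] at hm
      exact hp.one_lt.ne hm
    have hf : χ.FactorsThrough p := by
      have := χ.factorsThrough_conductor
      rwa [hm, pow_one] at this
    have := aux_small p e D (by omega) he χ hχ hf hD F hF hsep
    refine le_trans (mul_le_mul_of_nonneg_left ?_ (norm_nonneg _)) this
    rw [Real.sqrt_eq_rpow]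
    apply Real.rpow_le_rpow_of_exponent_le hp1
    rw [Nat.cast_one]
    apply one_div_le_one_div_of_le <;> linarith
  · have hme : m ≤ e := by
      have := χ.conductor_dvd_level
      rw [hm] at this
      exact (Nat.pow_dvd_pow_iff_le_right hp.one_lt).1 this
    have hnf : ¬ χ.FactorsThrough (p ^ (m - 1)) := by
      intro hf
      have := DirichletCharacter.conductor_dvd_of_mem_conductorSet χ hf
      rw [hm, Nat.pow_dvd_pow_iff_le_right hp.one_lt] at this
      omega
    have hx := aux_not_factors p e (m - 1) (by omega) χ hnf
    have hθ : (1 : ℝ) ≤ (p : ℝ) ^ ((1 : ℝ) / D) := Real.one_le_rpow hp1 (by positivity)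
    have hθD : ((p : ℝ) ^ ((1 : ℝ) / D)) ^ D = p := by
      rw [← Real.rpow_natCast, ← Real.rpow_mul hp0.le]
      rw [one_div, inv_mul_cancel₀ (by positivity), Real.rpow_one]
    obtain ⟨h3, h4⟩ := aux_top p e he χ D (m - 1) _ hθ hθD (by omega) hx (by omega) hD F hF
    have h5 : (p : ℝ) ^ e * ((D : ℝ) - 1) ≤ (p : ℝ) ^ e * D :=
      mul_le_mul_of_nonneg_left (by linarith) hpe.le
    by_cases h6 : m ≤ D + 1
    · refine le_trans (mul_le_mul_of_nonneg_left ?_ (norm_nonneg _)) (h4.trans h5)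
      calc (p : ℝ) ^ ((m : ℝ) / (D + 1)) ≤ (p : ℝ) ^ (1 : ℝ) := by
            apply Real.rpow_le_rpow_of_exponent_le hp1
            rw [div_le_one (by positivity)]
            exact_mod_cast h6
        _ = p := Real.rpow_one _
    · refine le_trans (mul_le_mul_of_nonneg_left ?_ (norm_nonneg _)) (h3.trans h5)
      rw [← Real.rpow_natCast, ← Real.rpow_mul hp0.le]
      apply Real.rpow_le_rpow_of_exponent_le hp1
      rw [Nat.cast_sub (by omega), Nat.cast_one, one_div, inv_mul_eq_div,
        div_le_div_iff₀ (by positivity) (by positivity)]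
      have : (D : ℝ) + 1 ≤ m := by exact_mod_cast (by omega : D + 1 ≤ m)
      nlinarith

open Classical in
lemma aux_cond_count (p e m : ℕ) [Fact p.Prime] :
    (Finset.univ.filter (fun χ : DirichletCharacter ℂ (p ^ e) => χ.conductor = p ^ m)).card
      ≤ p ^ m := by
  by_cases hdv : p ^ m ∣ p ^ e
  · have hsub : (Finset.univ.filter
        (fun χ : DirichletCharacter ℂ (p ^ e) => χ.conductor = p ^ m)) ⊆
        Finset.univ.image (DirichletCharacter.changeLevel (R := ℂ) hdv) := by
      intro χ hχ
      rw [Finset.mem_filter] at hχ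
      have h1 := χ.factorsThrough_conductor
      rw [hχ.2] at h1
      rw [Finset.mem_image]
      exact ⟨h1.χ₀, Finset.mem_univ _, h1.eq_changeLevel.symm⟩
    refine (Finset.card_le_card hsub).trans (Finset.card_image_le.trans ?_)
    rw [Finset.card_univ, ← Nat.card_eq_fintype_card,
      DirichletCharacter.card_eq_totient_of_hasEnoughRootsOfUnity]
    exact Nat.totient_le _
  · rw [Finset.card_eq_zero.2]
    · exact Nat.zero_le _
    · rw [Finset.filter_eq_empty_iff]
      intro χ _ h
      exact hdv (h ▸ χ.conductor_dvd_level)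

open Classical in
lemma aux_sum_le (p e D J : ℕ) [Fact p.Prime] (hDp : 2 * D + 1 < p) (he : 1 ≤ e)
    (hD : 1 ≤ D) (F : ℤ[X])
    (hF : (F.map (Int.castRingHom (ZMod p))).natDegree = D)
    (hsep : (F.map (Int.castRingHom (ZMod p))).Separable) :
    ∑ χ ∈ Finset.univ.erase (1 : DirichletCharacter ℂ (p ^ e)),
      ‖∑ z : ZMod (p ^ e), if IsUnit z then χ (aeval z F) else 0‖ ^ J ≤
      ((p : ℝ) ^ e * D) ^ J *
        ∑ m ∈ Finset.range e, ((p : ℝ) ^ (1 - (J : ℝ) / (D + 1))) ^ (m + 1) := by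
  have hp : p.Prime := Fact.out
  have hp0 : (0 : ℝ) < p := by exact_mod_cast hp.pos
  have hcov : Finset.univ.erase (1 : DirichletCharacter ℂ (p ^ e)) ⊆
      (Finset.range e).biUnion (fun m => Finset.univ.filter
        (fun χ : DirichletCharacter ℂ (p ^ e) => χ.conductor = p ^ (m + 1))) := by
    intro χ hχ
    obtain ⟨k, hk, hk2⟩ := (Nat.dvd_prime_pow hp).1 χ.conductor_dvd_level
    have hk0 : k ≠ 0 := by
      rintro rfl
      rw [pow_zero, ← DirichletCharacter.eq_one_iff_conductor_eq_one] at hk2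
      exact (Finset.mem_erase.1 hχ).1 hk2
    rw [Finset.mem_biUnion]
    refine ⟨k - 1, Finset.mem_range.2 (by omega), ?_⟩
    rw [Finset.mem_filter]
    refine ⟨Finset.mem_univ _, ?_⟩
    rw [hk2, Nat.sub_add_cancel (by omega)]
  refine (Finset.sum_le_sum_of_subset_of_nonneg hcov (fun _ _ _ => by positivity)).trans ?_
  rw [Finset.sum_biUnion, Finset.mul_sum]
  swap
  · intro a _ b _ hab
    refine Finset.disjoint_left.2 fun χ h1 h2 => hab ?_
    rw [Finset.mem_filter] at h1 h2
    have := Nat.pow_right_injective hp.two_le (h1.2.symm.trans h2.2)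
    omega
  refine Finset.sum_le_sum fun m _ => ?_
  have hpt : ∀ χ ∈ Finset.univ.filter
        (fun χ : DirichletCharacter ℂ (p ^ e) => χ.conductor = p ^ (m + 1)),
      ‖∑ z : ZMod (p ^ e), if IsUnit z then χ (aeval z F) else 0‖ ^ J ≤
      ((p : ℝ) ^ e * D / (p : ℝ) ^ (((m + 1 : ℕ) : ℝ) / (D + 1))) ^ J := by
    intro χ hχ
    rw [Finset.mem_filter] at hχ
    refine pow_le_pow_left₀ (norm_nonneg _) ?_ _
    rw [le_div_iff₀ (by positivity)]
    exact aux_bound p e D (m + 1) hDp he χ hχ.2 (by omega) hD F hF hsep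
  refine (Finset.sum_le_card_nsmul _ _ _ hpt).trans ?_
  rw [nsmul_eq_mul]
  refine (mul_le_mul_of_nonneg_right (Nat.cast_le.2 (aux_cond_count p e (m + 1)))
    (by positivity)).trans (le_of_eq ?_)
  rw [div_pow, ← Real.rpow_natCast _ J, ← Real.rpow_natCast (_ ^ (1 - (J : ℝ) / (D + 1))),
    ← Real.rpow_natCast (_ ^ (((m + 1 : ℕ) : ℝ) / (D + 1))),
    ← Real.rpow_mul hp0.le, ← Real.rpow_mul hp0.le, Nat.cast_pow,
    ← Real.rpow_natCast (p : ℝ) (m + 1), mul_div_left_comm, ← Real.rpow_sub hp0]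
  congr 2
  field_simp

lemma aux_geom (p D J e : ℕ) (hp : 2 ≤ p) (hJ : D + 2 ≤ J) :
    ∑ m ∈ Finset.range e, ((p : ℝ) ^ (1 - (J : ℝ) / (D + 1))) ^ (m + 1) ≤
      2 * 2 ^ J * (p : ℝ) ^ (1 - (J : ℝ) / (D + 1)) := by
  have hp2 : (2 : ℝ) ≤ p := by exact_mod_cast hp
  have hJr : (D : ℝ) + 2 ≤ J := by exact_mod_cast hJ
  have hD1 : (0 : ℝ) < (D : ℝ) + 1 := by positivity
  set r := (p : ℝ) ^ (1 - (J : ℝ) / (D + 1)) with hr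
  have hr0 : 0 ≤ r := by positivity
  have h1 : r ≤ 1 - 1 / (2 * (D + 1)) := by
    calc r ≤ (p : ℝ) ^ (-(1 / ((D : ℝ) + 1))) := by
          apply Real.rpow_le_rpow_of_exponent_le (by linarith)
          rw [← neg_div, le_div_iff₀ hD1, sub_mul, div_mul_cancel₀ _ hD1.ne']
          linarith
      _ ≤ (2 : ℝ) ^ (-(1 / ((D : ℝ) + 1))) := by
          apply Real.rpow_le_rpow_of_nonpos (by norm_num) hp2
          have : 0 ≤ 1 / ((D : ℝ) + 1) := by positivity
          linarith
      _ = (1 + (-(1 / 2)) : ℝ) ^ (1 / ((D : ℝ) + 1)) := by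
          rw [Real.rpow_neg (by norm_num), ← Real.inv_rpow (by norm_num)]
          norm_num
      _ ≤ 1 + (1 / ((D : ℝ) + 1)) * (-(1 / 2)) := by
          apply rpow_one_add_le_one_add_mul_self (by norm_num) (by positivity)
          rw [div_le_one hD1]
          have : (0 : ℝ) ≤ D := by positivity
          linarith
      _ = _ := by field_simp; ring
  have h2 := mul_neg_geom_sum r e
  have h3 : ∑ m ∈ Finset.range e, r ^ (m + 1) = r * ∑ m ∈ Finset.range e, r ^ m := by
    rw [Finset.mul_sum]
    exact Finset.sum_congr rfl fun m _ => pow_succ' _ _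
  set G := ∑ m ∈ Finset.range e, r ^ m
  have hG : 0 ≤ G := Finset.sum_nonneg fun _ _ => by positivity
  have h4 : 1 / (2 * ((D : ℝ) + 1)) * G ≤ 1 := by
    have : (0 : ℝ) ≤ r ^ e := by positivity
    nlinarith
  have h5 : G ≤ 2 * (D + 1) := by
    rw [one_div, inv_mul_le_iff₀ (by positivity)] at h4
    linarith
  have h6 : (D : ℝ) + 1 ≤ 2 ^ J := by
    have : D + 1 < 2 ^ (D + 1) := Nat.lt_two_pow_self
    have h7 : 2 ^ (D + 1) ≤ 2 ^ J := Nat.pow_le_pow_right (by norm_num) (by omega)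
    exact_mod_cast (this.le.trans h7)
  rw [h3]
  nlinarith

open Classical in
lemma aux_A_ge (p e D : ℕ) [Fact p.Prime] (hDp : 2 * D + 1 < p) (he : 1 ≤ e)
    (F : ℤ[X]) (hD : 1 ≤ D)
    (hF : (F.map (Int.castRingHom (ZMod p))).natDegree = D) :
    (p : ℝ) ^ e ≤
      2 * ((Finset.univ.filter (fun z : ZMod (p ^ e) => IsUnit z ∧ IsUnit (aeval z F))).card : ℝ) := by
  have hp : p.Prime := Fact.out
  have hp0 : (0 : ℝ) < p := by exact_mod_cast hp.pos
  set Fb := F.map (Int.castRingHom (ZMod p)) with hFb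
  have hfib := aux_fiber p e he (fun a => if a ≠ 0 ∧ Fb.eval a ≠ 0 then 1 else 0)
  set A := Finset.univ.filter (fun z : ZMod (p ^ e) => IsUnit z ∧ IsUnit (aeval z F))
  set B := Finset.univ.filter (fun a : ZMod p => a ≠ 0 ∧ Fb.eval a ≠ 0)
  have hA : (A.card : ℂ) = ∑ z : ZMod (p ^ e), (fun a : ZMod p => if a ≠ 0 ∧ Fb.eval a ≠ 0 then (1 : ℂ) else 0)
      (ZMod.castHom (dvd_pow_self p (by omega : e ≠ 0)) (ZMod p) z) := by
    rw [Finset.card_filter, Nat.cast_sum]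
    refine Finset.sum_congr rfl fun z _ => ?_
    simp only [aux_unit_iff p e he, aux_cast_aeval p e he]
    split_ifs <;> simp
  have hB : (B.card : ℂ) = ∑ a : ZMod p, if a ≠ 0 ∧ Fb.eval a ≠ 0 then (1 : ℂ) else 0 := by
    rw [Finset.card_filter, Nat.cast_sum]
    refine Finset.sum_congr rfl fun z _ => ?_
    split_ifs <;> simp
  rw [← hA, ← hB] at hfib
  have hfib2 : p * A.card = p ^ e * B.card := by exact_mod_cast hfib
  have hF0 : Fb ≠ 0 := by
    intro h
    rw [h, natDegree_zero] at hF
    omega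
  have hcov : (Finset.univ : Finset (ZMod p)) ⊆ B ∪ insert 0 Fb.roots.toFinset := by
    intro a _
    by_cases h0 : a = 0
    · simp [h0]
    · by_cases h1 : Fb.eval a = 0
      · simp [hF0, h1]
      · simp [B, h0, h1]
  have hc := Finset.card_le_card hcov
  rw [Finset.card_univ, ZMod.card] at hc
  have hc2 := Finset.card_union_le B (insert 0 Fb.roots.toFinset)
  have hc3 := Finset.card_insert_le 0 Fb.roots.toFinset
  have hc4 := (Multiset.toFinset_card_le Fb.roots).trans (card_roots' Fb)
  have hB2 : p ≤ 2 * B.card := by omega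
  have h1 : p * p ^ e ≤ p * (2 * A.card) := by
    calc p * p ^ e = p ^ e * p := mul_comm _ _
      _ ≤ p ^ e * (2 * B.card) := Nat.mul_le_mul_left _ hB2
      _ = 2 * (p ^ e * B.card) := by ring
      _ = p * (2 * A.card) := by rw [← hfib2]; ring
  exact_mod_cast Nat.le_of_mul_le_mul_left h1 hp.pos

open Classical in
lemma aux_sum_units (q : ℕ) [NeZero q] (f : ZMod q → ℂ) :
    ∑ u : (ZMod q)ˣ, f u = ∑ z : ZMod q, if IsUnit z then f z else 0 := by
  rw [← Finset.sum_filter]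
  refine Finset.sum_bij (fun u _ => (u : ZMod q)) (fun u _ => by simp) (fun u _ v _ h => Units.ext h)
    (fun z hz => ?_) (fun _ _ => rfl)
  obtain ⟨u, rfl⟩ := (Finset.mem_filter.1 hz).2
  exact ⟨u, Finset.mem_univ _, rfl⟩

open Classical in
lemma aux_V (q J : ℕ) [NeZero q] (F : ℤ[X]) (w : (ZMod q)ˣ) :
    (q.totient : ℂ) * (Set.ncard {v : Fin J → (ZMod q)ˣ |
          ∏ i, (F.map (Int.castRingHom (ZMod q))).eval ((v i : (ZMod q)ˣ) : ZMod q) = (w : ZMod q)} : ℂ)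
      = ∑ χ : DirichletCharacter ℂ q, χ ((w : ZMod q)⁻¹) *
        (∑ z : ZMod q, if IsUnit z then χ (aeval z F) else 0) ^ J := by
  have hev : ∀ z : ZMod q, aeval z F = (F.map (Int.castRingHom (ZMod q))).eval z := by
    intro z
    rw [aeval_def, eval₂_eq_eval_map, algebraMap_int_eq]
  simp only [hev]
  set P := F.map (Int.castRingHom (ZMod q))
  have h1 : ∀ χ : DirichletCharacter ℂ q, χ ((w : ZMod q)⁻¹) *
        (∑ z : ZMod q, if IsUnit z then χ (P.eval z) else 0) ^ J =
      ∑ v : Fin J → (ZMod q)ˣ, χ ((w : ZMod q)⁻¹) * χ (∏ i, P.eval (v i : ZMod q)) := by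
    intro χ
    rw [← aux_sum_units q (fun z => χ (P.eval z)), Fintype.sum_pow, Finset.mul_sum]
    refine Finset.sum_congr rfl fun v _ => ?_
    rw [map_prod]
  simp only [h1]
  rw [Finset.sum_comm]
  simp only [DirichletCharacter.sum_char_inv_mul_char_eq ℂ w.isUnit]
  rw [← Finset.sum_filter, Finset.sum_const, nsmul_eq_mul, mul_comm]
  congr 2
  rw [← Set.ncard_coe_finset]
  congr 1
  ext v
  simp [eq_comm]

open Classical in
lemma aux_alpha (q : ℕ) [NeZero q] (F : ℤ[X]) :
    (q.totient : ℝ) * alpha F q =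
      ((Finset.univ.filter (fun z : ZMod q => IsUnit z ∧ IsUnit (aeval z F))).card : ℝ) := by
  have hq : 0 < q := Nat.pos_of_ne_zero (NeZero.ne q)
  have hφ : (q.totient : ℝ) ≠ 0 := by
    exact_mod_cast (Nat.totient_pos.2 hq).ne'
  rw [alpha, mul_div_cancel₀ _ hφ, ← Set.ncard_coe_finset]
  congr 1
  have key : ∀ a : ℕ, Int.gcd ((a : ℤ) * F.eval (a : ℤ)) (q : ℤ) = 1 ↔
      IsUnit (a : ZMod q) ∧ IsUnit (aeval (a : ZMod q) F) := by
    intro a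
    rw [← IsUnit.mul_iff, ← Int.isCoprime_iff_gcd_eq_one]
    have h2 : aeval (a : ZMod q) F = ((F.eval (a : ℤ) : ℤ) : ZMod q) := by
      have := aeval_algebraMap_apply (ZMod q) (a : ℤ) F
      simpa using this
    rw [h2, ← Int.cast_natCast (R := ZMod q) a, ← Int.cast_mul, ZMod.coe_int_isUnit_iff_isCoprime,
      isCoprime_comm]
  refine Set.ncard_congr (fun a _ => (a : ZMod q)) ?_ ?_ ?_
  · intro a ha
    simp only [Finset.coe_filter, Finset.mem_univ, true_and]
    exact (key a).1 ha.2
  · intro a b ha hb h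
    have := (ZMod.natCast_eq_natCast_iff' a b q).1 h
    rwa [Nat.mod_eq_of_lt ha.1, Nat.mod_eq_of_lt hb.1] at this
  · intro z hz
    simp only [Finset.coe_filter, Finset.mem_univ, true_and] at hz
    refine ⟨z.val, ⟨ZMod.val_lt z, (key _).2 ?_⟩, ZMod.natCast_zmod_val z⟩
    rw [ZMod.natCast_zmod_val]
    exact hz

lemma aux_main (F : ℤ[X]) (D p : ℕ) [Fact p.Prime] (hD : 1 ≤ D) (hDp : 2 * D + 1 < p)
    (hF : (F.map (Int.castRingHom (ZMod p))).natDegree = D)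
    (hsep : (F.map (Int.castRingHom (ZMod p))).Separable)
    (e J : ℕ) (he : 1 ≤ e) (hJ : D + 2 ≤ J) (w : (ZMod (p ^ e))ˣ) :
    |(Nat.totient (p ^ e) : ℝ) *
        (Set.ncard {v : Fin J → (ZMod (p ^ e))ˣ |
          ∏ i, (F.map (Int.castRingHom (ZMod (p ^ e)))).eval
              ((v i : (ZMod (p ^ e))ˣ) : ZMod (p ^ e)) = (w : ZMod (p ^ e))} : ℝ)
      - ((Nat.totient (p ^ e) : ℝ) * alpha F (p ^ e)) ^ J|
      ≤ 2 * (4 * (D : ℝ)) ^ J * (p : ℝ) ^ ((1 : ℝ) - (J : ℝ) / ((D : ℝ) + 1))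
          * ((Nat.totient (p ^ e) : ℝ) * alpha F (p ^ e)) ^ J := by
  classical
  have hV := aux_V (p ^ e) J F w
  have hA := aux_A_ge p e D hDp he F hD hF
  have hS := aux_sum_le p e D J hDp he hD F hF hsep
  have hG := aux_geom p D J e (by omega) hJ
  rw [aux_alpha]
  set V := Set.ncard {v : Fin J → (ZMod (p ^ e))ˣ |
          ∏ i, (F.map (Int.castRingHom (ZMod (p ^ e)))).eval
              ((v i : (ZMod (p ^ e))ˣ) : ZMod (p ^ e)) = (w : ZMod (p ^ e))}
  set A := (Finset.univ.filter (fun z : ZMod (p ^ e) => IsUnit z ∧ IsUnit (aeval z F))).card with hAd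
  set r := (p : ℝ) ^ ((1 : ℝ) - (J : ℝ) / ((D : ℝ) + 1))
  have hr0 : 0 ≤ r := by positivity
  rw [← Finset.add_sum_erase _ _ (Finset.mem_univ (1 : DirichletCharacter ℂ (p ^ e)))] at hV
  have hone : ∑ z : ZMod (p ^ e), (if IsUnit z then (1 : DirichletCharacter ℂ (p ^ e)) (aeval z F) else 0)
      = (A : ℂ) := by
    rw [hAd, Finset.card_filter, Nat.cast_sum]
    refine Finset.sum_congr rfl fun z _ => ?_
    by_cases h1 : IsUnit z
    · by_cases h2 : IsUnit (aeval z F)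
      · simp [h1, h2, MulChar.one_apply]
      · simp [h1, h2, MulChar.map_nonunit]
    · simp [h1]
  have hwi : IsUnit ((w : ZMod (p ^ e))⁻¹) := by
    rw [ZMod.inv_coe_unit]
    exact Units.isUnit _
  rw [hone, MulChar.one_apply hwi, one_mul] at hV
  have hnorm : |(Nat.totient (p ^ e) : ℝ) * (V : ℝ) - (A : ℝ) ^ J| =
      ‖(Nat.totient (p ^ e) : ℂ) * (V : ℂ) - (A : ℂ) ^ J‖ := by
    rw [← Real.norm_eq_abs, ← Complex.norm_real]
    push_cast
    rfl
  rw [hnorm, hV, add_sub_cancel_left]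
  calc _ ≤ ∑ χ ∈ Finset.univ.erase (1 : DirichletCharacter ℂ (p ^ e)),
      ‖∑ z : ZMod (p ^ e), if IsUnit z then χ (aeval z F) else 0‖ ^ J := by
        refine norm_sum_le_of_le _ fun χ _ => ?_
        rw [norm_mul, norm_pow]
        exact mul_le_of_le_one_left (by positivity) (DirichletCharacter.norm_le_one _ _)
    _ ≤ _ := hS
    _ ≤ (2 * (A : ℝ) * D) ^ J * (2 * 2 ^ J * r) := by gcongr
    _ = _ := by
        rw [show (4 : ℝ) * D = 2 * 2 * D by ring]
        simp only [mul_pow]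
        ring

end AuxHelpers

/-- **Equation (5.2) of §5.** Let `F ∈ ℤ[T]` be nonconstant of degree `D` with no multiple
roots. Let `ℓ > 2D+1` be an odd prime dividing neither the leading coefficient of `F` nor the
discriminant of `T·F(T)` (of `F` itself when `F(0) = 0`); the latter condition, given
`ℓ ∤ lc(F)`, is expressed by requiring the reduction of `T·F(T)` (resp. `F`) mod `ℓ` to be
separable. Then for `e ≥ 1`, `J ≥ D+2`, and any unit `w` mod `ℓ^e`, the count `V` of tuples
`(v₁, …, v_J)` of units mod `ℓ^e` with `∏ F(vᵢ) ≡ w (mod ℓ^e)` satisfies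
`|φ(ℓ^e) V − (φ(ℓ^e) α(ℓ^e))^J| ≤ 2 (4D)^J ℓ^{1 - J/(D+1)} (φ(ℓ^e) α(ℓ^e))^J`. -/
theorem stmt15 (F : Polynomial ℤ) (D : ℕ) (hD : D = F.natDegree) (hFdeg : 0 < D)
    (hFsep : Squarefree (F.map (Int.castRingHom ℚ)))
    (ℓ : ℕ) (hℓ : ℓ.Prime) (hodd : ℓ ≠ 2) (hℓD : 2 * D + 1 < ℓ)
    (hlc : ¬ (ℓ : ℤ) ∣ F.leadingCoeff)
    (hdisc : Polynomial.Separable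
      (if F.eval 0 = 0 then F.map (Int.castRingHom (ZMod ℓ))
       else Polynomial.X * F.map (Int.castRingHom (ZMod ℓ))))
    (e J : ℕ) (he : 1 ≤ e) (hJ : D + 2 ≤ J) (w : (ZMod (ℓ ^ e))ˣ) :
    |(Nat.totient (ℓ ^ e) : ℝ) *
        (Set.ncard {v : Fin J → (ZMod (ℓ ^ e))ˣ |
          ∏ i, (F.map (Int.castRingHom (ZMod (ℓ ^ e)))).eval
              ((v i : (ZMod (ℓ ^ e))ˣ) : ZMod (ℓ ^ e)) = (w : ZMod (ℓ ^ e))} : ℝ)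
      - ((Nat.totient (ℓ ^ e) : ℝ) * alpha F (ℓ ^ e)) ^ J|
      ≤ 2 * (4 * (D : ℝ)) ^ J * (ℓ : ℝ) ^ ((1 : ℝ) - (J : ℝ) / ((D : ℝ) + 1))
          * ((Nat.totient (ℓ ^ e) : ℝ) * alpha F (ℓ ^ e)) ^ J := by
  have : Fact ℓ.Prime := ⟨hℓ⟩
  have hne : Int.castRingHom (ZMod ℓ) F.leadingCoeff ≠ 0 := by
    intro h
    apply hlc
    rw [← ZMod.intCast_zmod_eq_zero_iff_dvd]
    exact h
  have hF : (F.map (Int.castRingHom (ZMod ℓ))).natDegree = D := by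
    rw [hD]
    exact Polynomial.natDegree_map_of_leadingCoeff_ne_zero _ hne
  have hsep : (F.map (Int.castRingHom (ZMod ℓ))).Separable := by
    split_ifs at hdisc
    · exact hdisc
    · exact hdisc.of_mul_right
  exact aux_main F D ℓ hFdeg hℓD hF hsep e J he hJ w
end
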